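/- Let α, β ≥ 1 and ε ∈ (0,1). There exists a constant C depending only on α, β, ε such that for every multiplicative function g : ℕ → ℝ with g(n) ≥ 0 for all n, g(p^v) ≤ α^v for all primes p and all integers v ≥ 1, and g(n) ≤ β n^{ε³/1000} for all n ≥ 1, and for all reals X, Y with 2 ≤ X^ε ≤ Y ≤ X, one has (1/Y) · ∑_{X ≤ n ≤ X+Y} g(n) ≤ C · ∏_{p ≤ X, p prime} (1 + (g(p) − 1)/p). -/

import Mathlib

open Finset

/-!
Cut `n` at a power `Q` of `Y` with a small exponent, and look at its `Q`-smooth part. If that part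
is at most `Q ^ 100`, the rest of `n` has boundedly many prime factors, all large, so `g n` is at
most a constant times the value of `g` at the smooth part `b`, and Selberg's sieve bounds the number
of `n` in the interval with smooth part `b` by `O(Y / (b log Q))`; summing `g b / b` over smooth `b`
gives the Euler product. Otherwise let `q` be the critical prime at which the `q`-smooth part, with
the primes adjoined in increasing order, reaches `Q ^ 100`. Then either a large power of `q` divides
`n`, or `q` is bounded and `n` has a large divisor composed of bounded primes, and both cases are so
rare that the trivial bound for `g` suffices; or the sieve can be run with the primes below `q`, and
Rankin's trick gains enough over the large smooth parts to offset the loss that is exponential in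
`log X / log q` and to leave a factor `log q / log Q`, whose sum against `1 / q` is bounded by
Mertens' estimate.
-/

namespace Shiu

open Real (exp log)

/-! ### A Chebyshev–Mertens estimate -/

theorem prod_primesBelow_pow_div_dvd_factorial (q : ℕ) :
    ∏ p ∈ q.primesBelow, p ^ (q / p) ∣ q.factorial := by
  refine Finset.prod_dvd_of_isRelPrime (fun p hp r hr hpr => ?_) fun p hp => ?_
  · exact Nat.coprime_iff_isRelPrime.1 (Nat.Coprime.pow _ _ ((Nat.coprime_primes
      (Nat.prime_of_mem_primesBelow hp) (Nat.prime_of_mem_primesBelow hr)).2 hpr))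
  · have hpp := Nat.prime_of_mem_primesBelow hp
    have hlog : 1 ≤ Nat.log p q :=
      Nat.log_pos hpp.one_lt (Nat.lt_of_mem_primesBelow hp).le
    rw [hpp.pow_dvd_factorial_iff (Nat.lt_succ_self (Nat.log p q))]
    calc q / p = q / p ^ 1 := by rw [pow_one]
      _ ≤ _ := single_le_sum (f := fun i => q / p ^ i) (fun _ _ => Nat.zero_le _)
        (mem_Ico.2 (by lia))

theorem cast_div_two_mul_le_div {p q : ℕ} (hp : 0 < p) (hpq : p ≤ q) :
    (q : ℝ) / (2 * p) ≤ (q / p : ℕ) := by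
  have hdiv : q ≤ 2 * p * (q / p) := by
    have h1 : 1 ≤ q / p := (Nat.one_le_div_iff hp).2 hpq
    have h2 := Nat.div_add_mod q p
    have h3 := Nat.mod_lt q hp
    nlinarith
  have hdiv' : (q : ℝ) ≤ 2 * p * (q / p : ℕ) := by exact_mod_cast hdiv
  rw [div_le_iff₀ (by positivity)]
  linarith

theorem sum_primesBelow_log_div_le (q : ℕ) :
    ∑ p ∈ q.primesBelow, log p / p ≤ 2 * log q := by
  rcases q.eq_zero_or_pos with rfl | hq
  · simp
  have hpos : ∀ p ∈ q.primesBelow, (0 : ℝ) < p := fun p hp =>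
    Nat.cast_pos.2 (Nat.prime_of_mem_primesBelow hp).pos
  have hprod : ∏ p ∈ q.primesBelow, (p : ℝ) ^ (q / p) ≤ (q : ℝ) ^ q := by
    exact_mod_cast (Nat.le_of_dvd q.factorial_pos
      (prod_primesBelow_pow_div_dvd_factorial q)).trans q.factorial_le_pow
  have hlog : ∑ p ∈ q.primesBelow, (q / p : ℕ) * log p ≤ q * log q := by
    have h := Real.log_le_log (prod_pos fun p hp => pow_pos (hpos p hp) _) hprod
    rwa [Real.log_prod fun p hp => (pow_pos (hpos p hp) _).ne', Real.log_pow,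
      sum_congr rfl fun p _ => Real.log_pow _ _] at h
  have hq0 : (0 : ℝ) < q / 2 := by positivity
  refine le_of_mul_le_mul_left ?_ hq0
  calc (q : ℝ) / 2 * ∑ p ∈ q.primesBelow, log p / p
      = ∑ p ∈ q.primesBelow, q / (2 * p) * log p := by
        rw [mul_sum]
        exact sum_congr rfl fun p _ => by field_simp
    _ ≤ ∑ p ∈ q.primesBelow, (q / p : ℕ) * log p := by
        refine sum_le_sum fun p hp => mul_le_mul_of_nonneg_right ?_ (Real.log_natCast_nonneg p)
        exact cast_div_two_mul_le_div (Nat.prime_of_mem_primesBelow hp).pos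
          (Nat.lt_of_mem_primesBelow hp).le
    _ ≤ q / 2 * (2 * log q) := by linarith

/-! ### The density of integers without small prime factors -/

/-- The proportion `∏_{p < N} (1 - 1/p)` of integers without a prime factor below `N`. -/
noncomputable def sieveDensity (N : ℕ) : ℝ :=
  ∏ p ∈ N.primesBelow, (1 - 1 / (p : ℝ))

theorem one_sub_one_div_pos_of_mem_primesBelow {p N : ℕ} (hp : p ∈ N.primesBelow) :
    (0 : ℝ) < 1 - 1 / p := by
  have hp1 : (1 : ℝ) < p := by exact_mod_cast Nat.one_lt_of_mem_primesBelow hp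
  rw [sub_pos, div_lt_one (by linarith)]
  exact hp1

theorem sieveDensity_pos (N : ℕ) : 0 < sieveDensity N :=
  prod_pos fun _ => one_sub_one_div_pos_of_mem_primesBelow

theorem one_sub_one_div_mem_Icc_zero_one (p : ℕ) : (1 - 1 / (p : ℝ)) ∈ Set.Icc 0 1 := by
  have h1 : 1 / (p : ℝ) ≤ 1 := by simpa only [one_div] using Nat.cast_inv_le_one p
  have h0 : 0 ≤ 1 / (p : ℝ) := by positivity
  exact ⟨by linarith, by linarith⟩

theorem one_div_le_sieveDensity_succ {q : ℕ} (hq : 1 ≤ q) :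
    1 / (q : ℝ) ≤ sieveDensity (q + 1) := by
  induction q, hq using Nat.le_induction with
  | base => simp [sieveDensity, Nat.primesBelow_two]
  | succ q hq ih =>
    have : (0 : ℝ) < q := by exact_mod_cast hq
    have hstep : (1 - 1 / ((q + 1 : ℕ) : ℝ)) * sieveDensity (q + 1) ≤ sieveDensity (q + 1 + 1) := by
      unfold sieveDensity
      rw [Nat.primesBelow_succ (q + 1)]
      split_ifs with hp
      · rw [prod_insert (Nat.notMem_primesBelow _)]
      · exact mul_le_of_le_one_left (sieveDensity_pos _).le
          (one_sub_one_div_mem_Icc_zero_one _).2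
    calc 1 / ((q + 1 : ℕ) : ℝ) = (1 - 1 / ((q + 1 : ℕ) : ℝ)) * (1 / q) := by
          push_cast; field_simp; ring
      _ ≤ (1 - 1 / ((q + 1 : ℕ) : ℝ)) * sieveDensity (q + 1) :=
          mul_le_mul_of_nonneg_left ih (one_sub_one_div_mem_Icc_zero_one _).1
      _ ≤ sieveDensity (q + 1 + 1) := hstep

theorem exp_neg_two_div_le {x : ℝ} (hx : 2 ≤ x) : exp (-(2 / x)) ≤ 1 - 1 / x := by
  have hx0 : (0 : ℝ) < 1 - 1 / x := by rw [sub_pos, div_lt_one (by linarith)]; linarith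
  rw [Real.exp_neg, inv_le_comm₀ (Real.exp_pos _) hx0]
  calc (1 - 1 / x)⁻¹ ≤ 2 / x + 1 := by
        rw [inv_le_iff_one_le_mul₀ hx0]
        field_simp
        nlinarith
    _ ≤ exp (2 / x) := Real.add_one_le_exp _

theorem exp_neg_le_prod_one_sub_one_div {q : ℕ} (hq : 2 ≤ q) (N : ℕ) :
    exp (-(4 * log N / log q)) ≤ ∏ p ∈ N.primesBelow with q ≤ p, (1 - 1 / (p : ℝ)) := by
  have hlq : 0 < log q := Real.log_pos (by exact_mod_cast hq)
  have hfactor : ∀ p ∈ N.primesBelow.filter (q ≤ ·),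
      exp (-(2 / log q * (log p / p))) ≤ 1 - 1 / (p : ℝ) := by
    intro p hp
    have hqp : q ≤ p := (mem_filter.1 hp).2
    have hlog : log q ≤ log p := Real.log_le_log (by positivity) (by exact_mod_cast hqp)
    have hp2 : (2 : ℝ) ≤ p := by exact_mod_cast hq.trans hqp
    refine (Real.exp_le_exp.2 (neg_le_neg ?_)).trans (exp_neg_two_div_le hp2)
    calc 2 / (p : ℝ) = 2 / log q * (log q / p) := by field_simp
      _ ≤ 2 / log q * (log p / p) := by gcongr
  calc exp (-(4 * log N / log q))
      ≤ exp (∑ p ∈ N.primesBelow with q ≤ p, -(2 / log q * (log p / p))) := by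
        rw [sum_neg_distrib, ← mul_sum]
        refine Real.exp_le_exp.2 (neg_le_neg ?_)
        calc 2 / log q * ∑ p ∈ N.primesBelow with q ≤ p, log p / p
            ≤ 2 / log q * ∑ p ∈ N.primesBelow, log p / p := by
              gcongr
              exact filter_subset _ _
          _ ≤ 2 / log q * (2 * log N) := by
              gcongr
              exact sum_primesBelow_log_div_le N
          _ = 4 * log N / log q := by ring
    _ = ∏ p ∈ N.primesBelow with q ≤ p, exp (-(2 / log q * (log p / p))) := Real.exp_sum _ _
    _ ≤ _ := prod_le_prod (fun p _ => (Real.exp_pos _).le) hfactor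

theorem sieveDensity_mul_prod_le (q N : ℕ) :
    sieveDensity q * ∏ p ∈ N.primesBelow with q ≤ p, (1 - 1 / (p : ℝ)) ≤ sieveDensity N := by
  have hsplit := prod_filter_mul_prod_filter_not N.primesBelow (q ≤ ·) fun p => (1 - 1 / (p : ℝ))
  rw [sieveDensity, sieveDensity, ← hsplit, mul_comm]
  refine mul_le_mul_of_nonneg_left ?_
    (prod_nonneg fun p _ => (one_sub_one_div_mem_Icc_zero_one p).1)
  refine prod_le_prod_of_subset_of_le_one (fun p hp => ?_)
    (fun p _ => (one_sub_one_div_mem_Icc_zero_one p).1)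
    fun p _ _ => (one_sub_one_div_mem_Icc_zero_one p).2
  rw [mem_filter, not_le] at hp
  exact Nat.mem_primesBelow.2 ⟨hp.2, Nat.prime_of_mem_primesBelow hp.1⟩

theorem exists_mul_rpow_neg_le_sieveDensity {η : ℝ} (hη : 0 < η) :
    ∃ c : ℝ, 0 < c ∧ ∀ N : ℕ, 1 ≤ N → c * (N : ℝ) ^ (-η) ≤ sieveDensity N := by
  obtain ⟨q, hq⟩ := exists_nat_ge (exp (4 / η))
  have hq1 : (1 : ℝ) < q := (Real.one_lt_exp_iff.2 (by positivity)).trans_le hq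
  have hlq : 0 < log q := Real.log_pos hq1
  have hηq : 4 / log q ≤ η := by
    rw [div_le_comm₀ hlq hη]
    exact (Real.le_log_iff_exp_le (by linarith)).2 hq
  refine ⟨sieveDensity q, sieveDensity_pos q, fun N hN => ?_⟩
  have := Real.log_natCast_nonneg N
  refine le_trans ?_ (sieveDensity_mul_prod_le q N)
  refine mul_le_mul_of_nonneg_left ?_ (sieveDensity_pos q).le
  refine le_trans ?_ (exp_neg_le_prod_one_sub_one_div (by exact_mod_cast hq1) N)
  rw [Real.rpow_def_of_pos (by exact_mod_cast hN)]
  refine Real.exp_le_exp.2 ?_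
  calc log N * -η ≤ log N * -(4 / log q) := by gcongr
    _ = -(4 * log N / log q) := by ring

/-! ### Nonnegative multiplicative functions -/

/-- `g` is a multiplicative function with nonnegative real values. -/
structure IsNonnegMultiplicative (g : ℕ → ℝ) : Prop where
  map_one : g 1 = 1
  map_mul_of_coprime : ∀ m n : ℕ, Nat.Coprime m n → g (m * n) = g m * g n
  nonneg : ∀ n, 0 ≤ g n

/-- The class of multiplicative functions in Shiu's theorem: `g` is nonnegative and
multiplicative, grows at most like `α ^ v` along prime powers `p ^ v`, and at most like `β n ^ θ`
in general. -/
structure IsShiuFunction (α β θ : ℝ) (g : ℕ → ℝ) : Prop extends IsNonnegMultiplicative g where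
  prime_pow_le : ∀ p : ℕ, p.Prime → ∀ v : ℕ, 1 ≤ v → g (p ^ v) ≤ α ^ v
  le_rpow : ∀ n : ℕ, 1 ≤ n → g n ≤ β * (n : ℝ) ^ θ

section

variable {α β θ : ℝ} {g : ℕ → ℝ}

theorem IsShiuFunction.prime_le (hg : IsShiuFunction α β θ g) {p : ℕ} (hp : p.Prime) :
    g p ≤ α := by
  simpa only [pow_one] using hg.prime_pow_le p hp 1 le_rfl

theorem IsShiuFunction.alpha_nonneg (hg : IsShiuFunction α β θ g) : 0 ≤ α :=
  (hg.nonneg 2).trans (hg.prime_le Nat.prime_two)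

theorem IsShiuFunction.one_le_beta (hg : IsShiuFunction α β θ g) : 1 ≤ β := by
  simpa only [hg.map_one, Nat.cast_one, Real.one_rpow, mul_one] using hg.le_rpow 1 le_rfl

theorem IsNonnegMultiplicative.mul_rpow (hg : IsNonnegMultiplicative g) (s : ℝ) :
    IsNonnegMultiplicative fun n => g n * (n : ℝ) ^ s where
  map_one := by simp [hg.map_one]
  map_mul_of_coprime m n hmn := by
    rw [hg.map_mul_of_coprime m n hmn, Nat.cast_mul, Real.mul_rpow m.cast_nonneg n.cast_nonneg]
    ring
  nonneg n := mul_nonneg (hg.nonneg n) (by positivity)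

theorem IsNonnegMultiplicative.sum_le_prod_tsum (hg : IsNonnegMultiplicative g)
    (hsum : ∀ p : ℕ, p.Prime → Summable fun v : ℕ => g (p ^ v)) {q : ℕ} {B : Finset ℕ}
    (hB : ∀ b ∈ B, b ∈ Nat.smoothNumbers q) :
    ∑ b ∈ B, g b ≤ ∏ p ∈ q.primesBelow, ∑' v : ℕ, g (p ^ v) := by
  have hEuler := (EulerProduct.summable_and_hasSum_smoothNumbers_prod_primesBelow_tsum
    hg.map_one (hg.map_mul_of_coprime _ _) (fun hp => (hsum _ hp).norm) q).2
  rw [← hEuler.tsum_eq, ← sum_subtype_of_mem g hB]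
  exact hEuler.summable.sum_le_tsum _ fun b _ => hg.nonneg b

theorem le_rpow_log_div_log {α p q : ℝ} (hα : 1 ≤ α) (hq : 1 < q) (hqp : q ≤ p) :
    α ≤ p ^ (log α / log q) := by
  have hlq : 0 < log q := Real.log_pos hq
  have hlα : 0 ≤ log α := Real.log_nonneg hα
  rw [Real.rpow_def_of_pos (by linarith), ← Real.log_le_iff_le_exp (by linarith),
    ← mul_div_assoc, le_div_iff₀ hlq, mul_comm]
  gcongr

theorem IsShiuFunction.le_rpow_of_le_primeFactors (hg : IsShiuFunction α β θ g) (hα : 1 ≤ α)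
    {q : ℕ} (hq : 2 ≤ q) {d : ℕ} (hd : d ≠ 0) (hrough : ∀ p : ℕ, p.Prime → p ∣ d → q ≤ p) :
    g d ≤ (d : ℝ) ^ (log α / log q) := by
  induction d using Nat.recOnPosPrimePosCoprime with
  | zero => exact absurd rfl hd
  | one => simp [hg.map_one]
  | prime_pow p v hp hv =>
    have hqp : q ≤ p := hrough p hp (dvd_pow_self p hv.ne')
    have hαp : α ≤ (p : ℝ) ^ (log α / log q) :=
      le_rpow_log_div_log hα (by exact_mod_cast hq) (by exact_mod_cast hqp)
    calc g (p ^ v) ≤ α ^ v := hg.prime_pow_le p hp v hv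
      _ ≤ ((p : ℝ) ^ (log α / log q)) ^ v := by gcongr
      _ = ((p ^ v : ℕ) : ℝ) ^ (log α / log q) := by
        rw [Nat.cast_pow, Real.rpow_pow_comm p.cast_nonneg]
  | coprime a b ha hb hab iha ihb =>
    rw [hg.map_mul_of_coprime a b hab, Nat.cast_mul,
      Real.mul_rpow a.cast_nonneg b.cast_nonneg]
    exact mul_le_mul (iha (by lia) fun p hp hpa => hrough p hp (hpa.mul_right b))
      (ihb (by lia) fun p hp hpb => hrough p hp (hpb.mul_left a)) (hg.nonneg b) (by positivity)

/-! ### Rankin's bound for sums over smooth numbers -/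

theorem rpow_neg_three_quarters_le {p : ℕ} (hp : 2 ≤ p) : (p : ℝ) ^ (-(3 / 4) : ℝ) ≤ 3 / 5 := by
  have hp2 : (2 : ℝ) ≤ p := by exact_mod_cast hp
  refine le_of_pow_le_pow_left₀ (n := 4) (by norm_num) (by norm_num) ?_
  calc ((p : ℝ) ^ (-(3 / 4) : ℝ)) ^ 4 = ((p : ℝ) ^ 3)⁻¹ := by
        rw [← Real.rpow_mul_natCast p.cast_nonneg, ← Real.rpow_natCast,
          ← Real.rpow_neg p.cast_nonneg]
        norm_num
    _ ≤ ((2 : ℝ) ^ 3)⁻¹ := by gcongr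
    _ ≤ (3 / 5) ^ 4 := by norm_num

theorem summable_of_le_mul_pow {a : ℕ → ℝ} {x : ℝ} (ha : ∀ v, 0 ≤ a v) (hx0 : 0 ≤ x)
    (hx : x ≤ 3 / 5) (hax : ∀ v, a v ≤ β * x ^ v) : Summable a :=
  Summable.of_nonneg_of_le ha hax
    ((summable_geometric_of_lt_one hx0 (by linarith)).mul_left β)

theorem tsum_le_add_of_le_mul_pow {a : ℕ → ℝ} {x : ℝ} (ha : ∀ v, 0 ≤ a v) (hβ : 0 ≤ β)
    (hx0 : 0 ≤ x) (hx : x ≤ 3 / 5) (hax : ∀ v, a v ≤ β * x ^ v) :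
    ∑' v, a v ≤ a 0 + a 1 + 5 / 2 * β * x ^ 2 := by
  have hsum := summable_of_le_mul_pow ha hx0 hx hax
  have hgeom := (hasSum_geometric_of_lt_one hx0 (by linarith)).mul_left (β * x ^ 2)
  have hinv : (1 - x)⁻¹ ≤ 5 / 2 := by
    rw [inv_le_comm₀ (by linarith) (by norm_num)]
    linarith
  have htail : ∑' v, a (v + 2) ≤ 5 / 2 * β * x ^ 2 := calc
    ∑' v, a (v + 2) ≤ β * x ^ 2 * (1 - x)⁻¹ := by
      rw [← hgeom.tsum_eq]
      refine Summable.tsum_le_tsum (fun v => ?_) ((summable_nat_add_iff 2).2 hsum) hgeom.summable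
      exact (hax (v + 2)).trans_eq (by ring)
    _ ≤ β * x ^ 2 * (5 / 2) := by gcongr
    _ = 5 / 2 * β * x ^ 2 := by ring
  rw [← hsum.sum_add_tsum_nat_add 2, sum_range_succ, sum_range_one]
  linarith

theorem rpow_le_one_add_mul_log {p q κ K : ℝ} (hp : 1 ≤ p) (hpq : p ≤ q) (hq : 1 < q)
    (hκ : 0 ≤ κ) (hK : κ * log q ≤ K) :
    p ^ κ ≤ 1 + K * exp K / log q * log p := by
  have hlq : 0 < log q := Real.log_pos hq
  have hlp : 0 ≤ log p := Real.log_nonneg hp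
  have hlpq : log p ≤ log q := Real.log_le_log (by linarith) hpq
  have hK0 : 0 ≤ K := (mul_nonneg hκ hlq.le).trans hK
  have hexp : ∀ t : ℝ, exp t ≤ 1 + t * exp t := fun t => by
    have h := mul_le_mul_of_nonneg_right (Real.add_one_le_exp (-t)) (Real.exp_pos t).le
    rw [← Real.exp_add, neg_add_cancel, Real.exp_zero] at h
    linarith
  calc p ^ κ = exp (κ * log p) := by rw [Real.rpow_def_of_pos (by linarith), mul_comm]
    _ ≤ 1 + κ * log p * exp (κ * log p) := hexp _
    _ ≤ 1 + K / log q * log p * exp K := by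
      gcongr
      · rwa [le_div_iff₀ hlq]
      · exact (mul_le_mul_of_nonneg_left hlpq hκ).trans hK
    _ = 1 + K * exp K / log q * log p := by ring

theorem IsShiuFunction.prime_pow_mul_rpow_le (hg : IsShiuFunction α β θ g) {κ : ℝ}
    (hκ : θ + κ ≤ 1 / 4) {p : ℕ} (hp : p.Prime) (v : ℕ) :
    g (p ^ v) * ((p ^ v : ℕ) : ℝ) ^ (κ - 1) ≤ β * ((p : ℝ) ^ (-(3 / 4) : ℝ)) ^ v := by
  have hβ := hg.one_le_beta
  have hpv : 1 ≤ p ^ v := Nat.one_le_pow _ _ hp.pos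
  have hpv' : (1 : ℝ) ≤ (p ^ v : ℕ) := by exact_mod_cast hpv
  calc g (p ^ v) * ((p ^ v : ℕ) : ℝ) ^ (κ - 1)
      ≤ β * ((p ^ v : ℕ) : ℝ) ^ θ * ((p ^ v : ℕ) : ℝ) ^ (κ - 1) := by
        gcongr
        exact hg.le_rpow _ hpv
    _ = β * ((p ^ v : ℕ) : ℝ) ^ (θ + (κ - 1)) := by
        rw [mul_assoc, ← Real.rpow_add (by linarith)]
    _ ≤ β * ((p ^ v : ℕ) : ℝ) ^ (-(3 / 4) : ℝ) := by
        gcongr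
        linarith
    _ = β * ((p : ℝ) ^ (-(3 / 4) : ℝ)) ^ v := by
        rw [Nat.cast_pow, Real.rpow_pow_comm p.cast_nonneg]

theorem IsShiuFunction.prime_mul_rpow_le (hg : IsShiuFunction α β θ g) {κ K : ℝ} (hκ : 0 ≤ κ)
    {q : ℕ} (hK : κ * log q ≤ K) {p : ℕ} (hp : p ∈ q.primesBelow) :
    g p * (p : ℝ) ^ (κ - 1) ≤ g p / p + α * (K * exp K) / log q * (log p / p) := by
  have hpp := Nat.prime_of_mem_primesBelow hp
  have hp1 : (1 : ℝ) < p := by exact_mod_cast hpp.one_lt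
  have hpq : (p : ℝ) < q := by exact_mod_cast Nat.lt_of_mem_primesBelow hp
  have hlq : 0 < log q := Real.log_pos (hp1.trans hpq)
  have : 0 ≤ log p := Real.log_natCast_nonneg p
  have hK0 : 0 ≤ K := (mul_nonneg hκ hlq.le).trans hK
  have hgp : 0 ≤ g p := hg.nonneg p
  calc g p * (p : ℝ) ^ (κ - 1) = g p / p * (p : ℝ) ^ κ := by
        rw [Real.rpow_sub (by linarith), Real.rpow_one]
        ring
    _ ≤ g p / p * (1 + K * exp K / log q * log p) := by
        gcongr
        exact rpow_le_one_add_mul_log hp1.le hpq.le (hp1.trans hpq) hκ hK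
    _ = g p / p + g p * (K * exp K) / log q * (log p / p) := by ring
    _ ≤ g p / p + α * (K * exp K) / log q * (log p / p) := by
        gcongr
        exact hg.prime_le hpp

theorem IsShiuFunction.tsum_prime_pow_mul_rpow_le (hg : IsShiuFunction α β θ g) {κ K : ℝ}
    (hκ : 0 ≤ κ) (hθκ : θ + κ ≤ 1 / 4) {q : ℕ} (hK : κ * log q ≤ K) {p : ℕ}
    (hp : p ∈ q.primesBelow) :
    ∑' v : ℕ, g (p ^ v) * ((p ^ v : ℕ) : ℝ) ^ (κ - 1) ≤ (1 + g p / p) *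
      exp (α * (K * exp K) / log q * (log p / p) + 5 / 2 * β * (p : ℝ) ^ (-(3 / 2) : ℝ)) := by
  have hpp := Nat.prime_of_mem_primesBelow hp
  set x : ℝ := (p : ℝ) ^ (-(3 / 4) : ℝ) with hx
  have hxsq : x ^ 2 = (p : ℝ) ^ (-(3 / 2) : ℝ) := by
    rw [hx, ← Real.rpow_mul_natCast p.cast_nonneg]
    norm_num
  have hseries := tsum_le_add_of_le_mul_pow
    (fun v => (hg.mul_rpow (κ - 1)).nonneg (p ^ v)) (by linarith [hg.one_le_beta])
    (by positivity) (rpow_neg_three_quarters_le hpp.two_le) (hg.prime_pow_mul_rpow_le hθκ hpp)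
  have hlinear := hg.prime_mul_rpow_le hκ hK hp
  rw [← hx, hxsq] at hseries
  simp only [pow_zero, pow_one, hg.map_one, Nat.cast_one, Real.one_rpow, one_mul] at hseries
  have hK0 : 0 ≤ K := (mul_nonneg hκ (Real.log_natCast_nonneg q)).trans hK
  have : 0 ≤ log q := Real.log_natCast_nonneg q
  have : 0 ≤ log p := Real.log_natCast_nonneg p
  have hα := hg.alpha_nonneg
  have hβ := hg.one_le_beta
  have hgp : 0 ≤ g p / p := div_nonneg (hg.nonneg p) p.cast_nonneg
  set E : ℝ := α * (K * exp K) / log q * (log p / p) + 5 / 2 * β * (p : ℝ) ^ (-(3 / 2) : ℝ) with hE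
  have hE0 : 0 ≤ E := by positivity
  calc ∑' v : ℕ, g (p ^ v) * ((p ^ v : ℕ) : ℝ) ^ (κ - 1) ≤ 1 + g p / p + E := by linarith
    _ ≤ (1 + g p / p) * (E + 1) := by nlinarith
    _ ≤ (1 + g p / p) * exp E := by
      gcongr
      exact Real.add_one_le_exp E

/-- The implied constant in Rankin's bound `IsShiuFunction.sum_mul_rpow_le` for sums
over smooth numbers, where `K` bounds the product of the Rankin shift and `log q`. -/
noncomputable def rankinConstant (α β K : ℝ) : ℝ :=
  exp (2 * (α * (K * exp K)) + 5 / 2 * β * ∑' n : ℕ, (n : ℝ) ^ (-(3 / 2) : ℝ))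

theorem rankinConstant_pos (α β K : ℝ) : 0 < rankinConstant α β K :=
  Real.exp_pos _

theorem div_log_mul_sum_primesBelow_log_div_le {c : ℝ} (hc : 0 ≤ c) (q : ℕ) :
    c / log q * ∑ p ∈ q.primesBelow, log p / p ≤ 2 * c := by
  have : 0 ≤ log q := Real.log_natCast_nonneg q
  calc c / log q * ∑ p ∈ q.primesBelow, log p / p ≤ c / log q * (2 * log q) := by
        gcongr
        exact sum_primesBelow_log_div_le q
    _ = 2 * c * (log q / log q) := by ring
    _ ≤ 2 * c := mul_le_of_le_one_right (by positivity) (div_self_le_one _)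

theorem IsShiuFunction.sum_mul_rpow_le (hg : IsShiuFunction α β θ g) {κ K : ℝ}
    (hκ : 0 ≤ κ) (hθκ : θ + κ ≤ 1 / 4) {q : ℕ} (hK : κ * log q ≤ K) {B : Finset ℕ}
    (hB : ∀ b ∈ B, b ∈ Nat.smoothNumbers q) :
    ∑ b ∈ B, g b * (b : ℝ) ^ (κ - 1) ≤
      rankinConstant α β K * ∏ p ∈ q.primesBelow, (1 + g p / p) := by
  have hα := hg.alpha_nonneg
  have hβ := hg.one_le_beta
  have hK0 : 0 ≤ K := (mul_nonneg hκ (Real.log_natCast_nonneg q)).trans hK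
  have hgs := hg.mul_rpow (κ - 1)
  have hsummable : ∀ p : ℕ, p.Prime →
      Summable fun v : ℕ => g (p ^ v) * ((p ^ v : ℕ) : ℝ) ^ (κ - 1) := fun p hp =>
    summable_of_le_mul_pow (fun v => hgs.nonneg (p ^ v)) (by positivity)
      (rpow_neg_three_quarters_le hp.two_le) (hg.prime_pow_mul_rpow_le hθκ hp)
  have hpow : ∑ p ∈ q.primesBelow, (p : ℝ) ^ (-(3 / 2) : ℝ) ≤ ∑' n : ℕ, (n : ℝ) ^ (-(3 / 2) : ℝ) :=
    (Real.summable_nat_rpow.2 (by norm_num)).sum_le_tsum _ fun n _ => by positivity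
  have hlog := div_log_mul_sum_primesBelow_log_div_le (c := α * (K * exp K)) (by positivity) q
  have hexp : ∏ p ∈ q.primesBelow,
      exp (α * (K * exp K) / log q * (log p / p) + 5 / 2 * β * (p : ℝ) ^ (-(3 / 2) : ℝ)) ≤
      rankinConstant α β K := by
    rw [← Real.exp_sum, rankinConstant, sum_add_distrib, ← mul_sum, ← mul_sum]
    gcongr
  refine (hgs.sum_le_prod_tsum hsummable hB).trans ?_
  refine (prod_le_prod (fun p _ => tsum_nonneg fun v => hgs.nonneg _) fun p hp =>
    hg.tsum_prime_pow_mul_rpow_le hκ hθκ hK hp).trans ?_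
  rw [prod_mul_distrib, mul_comm]
  refine mul_le_mul_of_nonneg_right hexp (prod_nonneg fun p _ => ?_)
  exact add_nonneg zero_le_one (div_nonneg (hg.nonneg p) p.cast_nonneg)

end

/-! ### Selberg's sieve -/

/-- Up to an error of at most `1`, a proportion `1 / m` of an ideal total of `L` elements of `I`
is divisible by `m`, as is the case for the integers in an interval of length `L`. -/
def MultiplesEquidistributed (I : Finset ℕ) (L : ℝ) : Prop :=
  ∀ m : ℕ, 1 ≤ m → |(#{n ∈ I | m ∣ n} : ℝ) - L / m| ≤ 1

section

variable {I : Finset ℕ} {L : ℝ} {T T' P : Finset ℕ} {R : ℕ}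

theorem prod_dvd_iff_forall_dvd (hP : ∀ p ∈ P, p.Prime) (n : ℕ) :
    ∏ p ∈ P, p ∣ n ↔ ∀ p ∈ P, p ∣ n :=
  ⟨fun h _ hp => (dvd_prod_of_mem _ hp).trans h,
    prod_primes_dvd n fun p hp => (hP p hp).prime⟩

theorem prod_one_add_ite_dvd (hP : ∀ p ∈ P, p.Prime) (c : ℕ → ℝ) (n : ℕ) :
    ∏ p ∈ P, (1 + if p ∣ n then c p else 0) =
      ∑ D ∈ P.powerset, if ∏ p ∈ D, p ∣ n then ∏ p ∈ D, c p else 0 := by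
  rw [prod_one_add]
  refine sum_congr rfl fun D hD => ?_
  rw [prod_ite_zero]
  simp only [prod_dvd_iff_forall_dvd fun p hp => hP p (mem_powerset.1 hD hp)]

theorem MultiplesEquidistributed.abs_sum_prod_sub_le (hI : MultiplesEquidistributed I L)
    (hP : ∀ p ∈ P, p.Prime) (c : ℕ → ℝ) :
    |∑ n ∈ I, ∏ p ∈ P, (1 + if p ∣ n then c p else 0) - L * ∏ p ∈ P, (1 + c p / p)| ≤
      ∏ p ∈ P, (1 + |c p|) := by
  have hsum : ∑ n ∈ I, ∏ p ∈ P, (1 + if p ∣ n then c p else 0) =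
      ∑ D ∈ P.powerset, (∏ p ∈ D, c p) * #{n ∈ I | ∏ p ∈ D, p ∣ n} := by
    simp only [prod_one_add_ite_dvd hP]
    rw [sum_comm]
    refine sum_congr rfl fun D _ => ?_
    rw [← sum_filter, sum_const, nsmul_eq_mul, mul_comm]
  have hmain : L * ∏ p ∈ P, (1 + c p / p) =
      ∑ D ∈ P.powerset, (∏ p ∈ D, c p) * (L / (∏ p ∈ D, p : ℕ)) := by
    rw [prod_one_add, mul_sum]
    refine sum_congr rfl fun D _ => ?_
    rw [prod_div_distrib, Nat.cast_prod]
    ring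
  rw [hsum, hmain, ← sum_sub_distrib, prod_one_add]
  refine (abs_sum_le_sum_abs _ _).trans (sum_le_sum fun D hD => ?_)
  have hD1 : 1 ≤ ∏ p ∈ D, p := prod_pos fun p hp => (hP p (mem_powerset.1 hD hp)).pos
  rw [← mul_sub, abs_mul, abs_prod]
  exact mul_le_of_le_one_right (prod_nonneg fun p _ => abs_nonneg _) (hI _ hD1)

/-- The multiplicative function of `n` with local factor `1 - p` at the primes `p ∈ T`
dividing `n`. These functions are orthogonal on average for distinct `T`, and equal to `1` at
integers free of prime factors in `T`. -/
def selbergFunction (T : Finset ℕ) (n : ℕ) : ℝ :=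
  ∏ p ∈ T, (1 + if p ∣ n then -(p : ℝ) else 0)

/-- The number `c p` such that `1 + c p` is the local factor of
`selbergFunction T * selbergFunction T'` at multiples of the prime `p ∈ T ∪ T'`. -/
def selbergCorrelationCoeff (T T' : Finset ℕ) (p : ℕ) : ℝ :=
  if p ∈ T ∩ T' then (p : ℝ) ^ 2 - 2 * p else -p

theorem selbergFunction_mul (T T' : Finset ℕ) (n : ℕ) :
    selbergFunction T n * selbergFunction T' n =
      ∏ p ∈ T ∪ T', (1 + if p ∣ n then selbergCorrelationCoeff T T' p else 0) := by
  rw [selbergFunction, selbergFunction, ← prod_union_inter, ← prod_sdiff inter_subset_union,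
    ← prod_sdiff (inter_subset_union : T ∩ T' ⊆ T ∪ T'), mul_assoc, ← prod_mul_distrib]
  congr 1
  · refine prod_congr rfl fun p hp => ?_
    rw [selbergCorrelationCoeff, if_neg (mem_sdiff.1 hp).2]
  · refine prod_congr rfl fun p hp => ?_
    rw [selbergCorrelationCoeff, if_pos hp]
    split_ifs <;> ring

theorem prod_one_add_selbergCorrelationCoeff_div (hT : ∀ p ∈ T, p.Prime)
    (hT' : ∀ p ∈ T', p.Prime) :
    ∏ p ∈ T ∪ T', (1 + selbergCorrelationCoeff T T' p / p) =
      if T = T' then ∏ p ∈ T, ((p : ℝ) - 1) else 0 := by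
  have hp0 : ∀ p ∈ T ∪ T', (p : ℝ) ≠ 0 := fun p hp =>
    Nat.cast_ne_zero.2 ((mem_union.1 hp).elim (hT p) (hT' p)).ne_zero
  split_ifs with h
  · subst h
    rw [union_self] at hp0 ⊢
    refine prod_congr rfl fun p hp => ?_
    rw [selbergCorrelationCoeff, inter_self, if_pos hp]
    field_simp [hp0 p hp]
    ring
  · obtain ⟨p, hp, hp'⟩ : ∃ p ∈ T ∪ T', p ∉ T ∩ T' := by
      by_contra! hsub
      exact h (subset_antisymm (fun p hp => (mem_inter.1 (hsub p (mem_union_left _ hp))).2)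
        fun p hp => (mem_inter.1 (hsub p (mem_union_right _ hp))).1)
    refine prod_eq_zero hp ?_
    rw [selbergCorrelationCoeff, if_neg hp', neg_div, div_self (hp0 p hp), add_neg_cancel]

theorem prod_one_add_abs_selbergCorrelationCoeff_le (hT : ∀ p ∈ T, p.Prime) :
    ∏ p ∈ T ∪ T', (1 + |selbergCorrelationCoeff T T' p|) ≤
      (∏ p ∈ T, (1 + (p : ℝ))) * ∏ p ∈ T', (1 + (p : ℝ)) := by
  rw [← prod_union_inter, ← prod_sdiff inter_subset_union,
    ← prod_sdiff (inter_subset_union : T ∩ T' ⊆ T ∪ T'), mul_assoc, ← prod_mul_distrib]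
  refine mul_le_mul (prod_le_prod (fun p _ => by positivity) fun p hp => ?_)
    (prod_le_prod (fun p _ => by positivity) fun p hp => ?_)
    (prod_nonneg fun p _ => by positivity) (prod_nonneg fun p _ => by positivity)
  · rw [selbergCorrelationCoeff, if_neg (mem_sdiff.1 hp).2, abs_neg, Nat.abs_cast]
  · have hp2 : (2 : ℝ) ≤ p := by exact_mod_cast (hT p (mem_inter.1 hp).1).two_le
    rw [selbergCorrelationCoeff, if_pos hp, abs_of_nonneg (by nlinarith)]
    nlinarith

theorem MultiplesEquidistributed.sum_selbergFunction_mul_le (hI : MultiplesEquidistributed I L)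
    (hT : ∀ p ∈ T, p.Prime) (hT' : ∀ p ∈ T', p.Prime) :
    ∑ n ∈ I, selbergFunction T n * selbergFunction T' n ≤
      L * (if T = T' then ∏ p ∈ T, ((p : ℝ) - 1) else 0) +
        (∏ p ∈ T, (1 + (p : ℝ))) * ∏ p ∈ T', (1 + (p : ℝ)) := by
  have hunion : ∀ p ∈ T ∪ T', p.Prime := fun p hp => (mem_union.1 hp).elim (hT p) (hT' p)
  have h := (abs_le.1 (hI.abs_sum_prod_sub_le hunion (selbergCorrelationCoeff T T'))).2
  rw [prod_one_add_selbergCorrelationCoeff_div hT hT'] at h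
  have herr := prod_one_add_abs_selbergCorrelationCoeff_le (T' := T') hT
  simp only [selbergFunction_mul]
  linarith

/-- The sets of primes in `P` whose product is at most the sieve level `R`. -/
def selbergSupport (P : Finset ℕ) (R : ℕ) : Finset (Finset ℕ) :=
  {T ∈ P.powerset | ∏ p ∈ T, p ≤ R}

/-- The weight of the `selbergFunction` of `T` in Selberg's quadratic form: one over its mean
square. -/
noncomputable def selbergWeight (T : Finset ℕ) : ℝ :=
  ∏ p ∈ T, (1 / ((p : ℝ) - 1))

/-- The total weight of the sets of primes used by Selberg's sieve of level `R`. -/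
noncomputable def selbergSum (P : Finset ℕ) (R : ℕ) : ℝ :=
  ∑ T ∈ selbergSupport P R, selbergWeight T

theorem subset_of_mem_selbergSupport (hT : T ∈ selbergSupport P R) : T ⊆ P :=
  mem_powerset.1 (mem_filter.1 hT).1

theorem prod_le_of_mem_selbergSupport (hT : T ∈ selbergSupport P R) : ∏ p ∈ T, p ≤ R :=
  (mem_filter.1 hT).2

theorem card_selbergSupport_le (hP : ∀ p ∈ P, p.Prime) : #(selbergSupport P R) ≤ R := by
  have hprime : ∀ T ∈ selbergSupport P R, ∀ p ∈ T, p.Prime := fun T hT p hp =>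
    hP p (subset_of_mem_selbergSupport hT hp)
  have hcard : #(selbergSupport P R) ≤ #(Icc 1 R) := by
    refine card_le_card_of_injOn (fun T => ∏ p ∈ T, p) (fun T hT => ?_) fun T hT T' hT' heq => ?_
    · exact mem_Icc.2 ⟨prod_pos fun p hp => (hprime T hT p hp).pos,
        prod_le_of_mem_selbergSupport hT⟩
    · rw [← Nat.primeFactors_prod (hprime T hT), ← Nat.primeFactors_prod (hprime T' hT')]
      exact congrArg Nat.primeFactors heq
  simpa only [Nat.card_Icc, Nat.add_sub_cancel] using hcard

theorem selbergWeight_nonneg (hT : ∀ p ∈ T, p.Prime) : 0 ≤ selbergWeight T :=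
  prod_nonneg fun p hp => by
    have hp1 : (1 : ℝ) < p := by exact_mod_cast (hT p hp).one_lt
    exact div_nonneg zero_le_one (by linarith)

theorem selbergWeight_mul_prod_sub_one (hT : ∀ p ∈ T, p.Prime) :
    selbergWeight T * ∏ p ∈ T, ((p : ℝ) - 1) = 1 := by
  rw [selbergWeight, ← prod_mul_distrib]
  refine prod_eq_one fun p hp => one_div_mul_cancel ?_
  have hp1 : (1 : ℝ) < p := by exact_mod_cast (hT p hp).one_lt
  linarith

theorem selbergWeight_mul_prod_one_add_le (hT : ∀ p ∈ T, p.Prime) :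
    selbergWeight T * ∏ p ∈ T, (1 + (p : ℝ)) ≤ ((∏ p ∈ T, p : ℕ) : ℝ) ^ 2 := by
  rw [selbergWeight, ← prod_mul_distrib, Nat.cast_prod, ← prod_pow]
  have hp2 : ∀ p ∈ T, (2 : ℝ) ≤ p := fun p hp => by exact_mod_cast (hT p hp).two_le
  refine prod_le_prod (fun p hp => ?_) fun p hp => ?_
  · have := hp2 p hp
    exact mul_nonneg (div_nonneg zero_le_one (by linarith)) (by linarith)
  · have := hp2 p hp
    rw [one_div, inv_mul_le_iff₀ (by linarith)]
    nlinarith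

theorem one_le_selbergSum (hP : ∀ p ∈ P, p.Prime) (hR : 1 ≤ R) : 1 ≤ selbergSum P R := by
  have hempty : ∅ ∈ selbergSupport P R := by simpa [selbergSupport] using hR
  calc 1 = selbergWeight ∅ := by rw [selbergWeight, prod_empty]
    _ ≤ selbergSum P R := single_le_sum (fun T hT => selbergWeight_nonneg fun p hp =>
        hP p (subset_of_mem_selbergSupport hT hp)) hempty

theorem sum_selbergWeight_mul_prod_one_add_le (hP : ∀ p ∈ P, p.Prime) :
    ∑ T ∈ selbergSupport P R, selbergWeight T * ∏ p ∈ T, (1 + (p : ℝ)) ≤ (R : ℝ) ^ 3 := by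
  calc ∑ T ∈ selbergSupport P R, selbergWeight T * ∏ p ∈ T, (1 + (p : ℝ))
      ≤ ∑ T ∈ selbergSupport P R, (R : ℝ) ^ 2 := sum_le_sum fun T hT =>
        (selbergWeight_mul_prod_one_add_le fun p hp =>
          hP p (subset_of_mem_selbergSupport hT hp)).trans (by
            have := prod_le_of_mem_selbergSupport hT
            gcongr)
    _ = #(selbergSupport P R) * (R : ℝ) ^ 2 := by rw [sum_const, nsmul_eq_mul]
    _ ≤ R * (R : ℝ) ^ 2 := by
        gcongr
        exact card_selbergSupport_le hP
    _ = (R : ℝ) ^ 3 := by ring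

theorem MultiplesEquidistributed.sum_sq_sum_selbergWeight_mul_le
    (hI : MultiplesEquidistributed I L) (hP : ∀ p ∈ P, p.Prime) :
    ∑ n ∈ I, (∑ T ∈ selbergSupport P R, selbergWeight T * selbergFunction T n) ^ 2 ≤
      L * selbergSum P R + (R : ℝ) ^ 6 := by
  have hprime : ∀ T ∈ selbergSupport P R, ∀ p ∈ T, p.Prime := fun T hT p hp =>
    hP p (subset_of_mem_selbergSupport hT hp)
  have hweight : ∀ T ∈ selbergSupport P R, 0 ≤ selbergWeight T := fun T hT =>
    selbergWeight_nonneg (hprime T hT)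
  set E : Finset ℕ → ℝ := fun T => selbergWeight T * ∏ p ∈ T, (1 + (p : ℝ))
  have hE : ∑ T ∈ selbergSupport P R, E T ≤ (R : ℝ) ^ 3 :=
    sum_selbergWeight_mul_prod_one_add_le hP
  have hE0 : 0 ≤ ∑ T ∈ selbergSupport P R, E T := sum_nonneg fun T hT =>
    mul_nonneg (hweight T hT) (prod_nonneg fun p _ => by positivity)
  calc ∑ n ∈ I, (∑ T ∈ selbergSupport P R, selbergWeight T * selbergFunction T n) ^ 2
      = ∑ T ∈ selbergSupport P R, ∑ T' ∈ selbergSupport P R,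
          selbergWeight T * selbergWeight T' *
            ∑ n ∈ I, selbergFunction T n * selbergFunction T' n := by
        simp only [sq, sum_mul_sum]
        rw [sum_comm]
        refine sum_congr rfl fun T _ => ?_
        rw [sum_comm]
        refine sum_congr rfl fun T' _ => ?_
        rw [mul_sum]
        exact sum_congr rfl fun n _ => by ring
    _ ≤ ∑ T ∈ selbergSupport P R, ∑ T' ∈ selbergSupport P R,
          ((if T = T' then L * selbergWeight T' else 0) + E T * E T') := by
        refine sum_le_sum fun T hT => sum_le_sum fun T' hT' => ?_
        refine (mul_le_mul_of_nonneg_left (hI.sum_selbergFunction_mul_le (hprime T hT)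
          (hprime T' hT')) (mul_nonneg (hweight T hT) (hweight T' hT'))).trans_eq ?_
        split_ifs with h
        · subst h
          linear_combination L * selbergWeight T * selbergWeight_mul_prod_sub_one (hprime T hT)
        · ring
    _ = L * selbergSum P R + (∑ T ∈ selbergSupport P R, E T) ^ 2 := by
        simp only [sum_add_distrib, sum_ite_eq, sum_ite_mem, inter_self, ← mul_sum, ← sum_mul,
          selbergSum, sq]
    _ ≤ L * selbergSum P R + ((R : ℝ) ^ 3) ^ 2 := by gcongr
    _ = L * selbergSum P R + (R : ℝ) ^ 6 := by ring

theorem selbergFunction_eq_one {n : ℕ} (hn : ∀ p ∈ T, ¬ p ∣ n) : selbergFunction T n = 1 :=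
  prod_eq_one fun p hp => by rw [if_neg (hn p hp), add_zero]

theorem MultiplesEquidistributed.card_sifted_le (hI : MultiplesEquidistributed I L)
    (hP : ∀ p ∈ P, p.Prime) (hR : 1 ≤ R) :
    (#{n ∈ I | ∀ p ∈ P, ¬ p ∣ n} : ℝ) ≤ L / selbergSum P R + (R : ℝ) ^ 6 := by
  set G := selbergSum P R
  have hG1 : 1 ≤ G := one_le_selbergSum hP hR
  have hsifted : ∀ n ∈ I.filter (fun n => ∀ p ∈ P, ¬ p ∣ n),
      ∑ T ∈ selbergSupport P R, selbergWeight T * selbergFunction T n = G := fun n hn =>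
    sum_congr rfl fun T hT => by
      rw [selbergFunction_eq_one fun p hp =>
        (mem_filter.1 hn).2 p (subset_of_mem_selbergSupport hT hp), mul_one]
  have hlower : (#{n ∈ I | ∀ p ∈ P, ¬ p ∣ n} : ℝ) * G ^ 2 ≤
      ∑ n ∈ I, (∑ T ∈ selbergSupport P R, selbergWeight T * selbergFunction T n) ^ 2 := by
    rw [← nsmul_eq_mul, ← sum_const]
    refine (sum_congr rfl fun n hn => ?_).trans_le
      (sum_le_sum_of_subset_of_nonneg (filter_subset _ _) fun n _ _ => sq_nonneg _)
    rw [hsifted n hn]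
  have hupper := hI.sum_sq_sum_selbergWeight_mul_le (R := R) hP
  refine le_of_mul_le_mul_right ?_ (by positivity : 0 < G ^ 2)
  calc (#{n ∈ I | ∀ p ∈ P, ¬ p ∣ n} : ℝ) * G ^ 2 ≤ L * G + (R : ℝ) ^ 6 := hlower.trans hupper
    _ ≤ L * G + (R : ℝ) ^ 6 * G ^ 2 := by
        gcongr
        exact le_mul_of_one_le_right (by positivity) (one_le_pow₀ hG1)
    _ = (L / G + (R : ℝ) ^ 6) * G ^ 2 := by field_simp

end

/-! ### The sieve in short intervals -/

theorem sieveDensity_inv_eq_sum_selbergWeight (q : ℕ) :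
    (sieveDensity q)⁻¹ = ∑ T ∈ q.primesBelow.powerset, selbergWeight T := by
  unfold selbergWeight
  rw [sieveDensity, ← prod_inv_distrib, ← prod_one_add]
  refine prod_congr rfl fun p hp => ?_
  have hp1 : (1 : ℝ) < p := by exact_mod_cast Nat.one_lt_of_mem_primesBelow hp
  have hne : (p : ℝ) - 1 ≠ 0 := by linarith
  field_simp
  ring

theorem prod_exp_mul_log_div_le {c : ℝ} (hc : 0 ≤ c) (q : ℕ) :
    ∏ p ∈ q.primesBelow, exp (c / log q * (log p / p)) ≤ exp (2 * c) := by
  rw [← Real.exp_sum, ← mul_sum]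
  exact Real.exp_le_exp.2 (div_log_mul_sum_primesBelow_log_div_le hc q)

theorem one_add_rpow_div_le {p q : ℕ} (hp : p ∈ q.primesBelow) :
    1 + (p : ℝ) ^ (1 / log q) / (p - 1) ≤
      (1 - 1 / (p : ℝ))⁻¹ * exp (exp 1 / log q * (log p / p)) := by
  have hp1 : (1 : ℝ) < p := by exact_mod_cast Nat.one_lt_of_mem_primesBelow hp
  have hpq : (p : ℝ) < q := by exact_mod_cast Nat.lt_of_mem_primesBelow hp
  have hlq : 0 < log q := Real.log_pos (hp1.trans hpq)
  have hne : (p : ℝ) - 1 ≠ 0 := by linarith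
  have hrpow := rpow_le_one_add_mul_log hp1.le hpq.le (hp1.trans hpq) (by positivity)
    (one_div_mul_cancel hlq.ne').le
  calc 1 + (p : ℝ) ^ (1 / log q) / (p - 1)
      = (1 - 1 / (p : ℝ))⁻¹ * (((p : ℝ) ^ (1 / log q) - 1) / p + 1) := by
        field_simp
        ring
    _ ≤ (1 - 1 / (p : ℝ))⁻¹ * (1 * exp 1 / log q * log p / p + 1) := by
        have := (one_sub_one_div_pos_of_mem_primesBelow hp).le
        gcongr
        linarith
    _ = (1 - 1 / (p : ℝ))⁻¹ * (exp 1 / log q * (log p / p) + 1) := by ring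
    _ ≤ _ := by
        have := (one_sub_one_div_pos_of_mem_primesBelow hp).le
        gcongr
        exact Real.add_one_le_exp _

theorem sum_powerset_prod_rpow_mul_selbergWeight_le (q : ℕ) :
    ∑ T ∈ q.primesBelow.powerset, (∏ p ∈ T, (p : ℝ) ^ (1 / log q)) * selbergWeight T ≤
      exp (2 * exp 1) * (sieveDensity q)⁻¹ := by
  have hsum : ∑ T ∈ q.primesBelow.powerset, (∏ p ∈ T, (p : ℝ) ^ (1 / log q)) * selbergWeight T =
      ∏ p ∈ q.primesBelow, (1 + (p : ℝ) ^ (1 / log q) / (p - 1)) := by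
    rw [prod_one_add]
    refine sum_congr rfl fun T _ => ?_
    rw [selbergWeight, ← prod_mul_distrib]
    exact prod_congr rfl fun p _ => mul_one_div _ _
  have hnonneg : ∀ p ∈ q.primesBelow, (0 : ℝ) ≤ 1 + (p : ℝ) ^ (1 / log q) / (p - 1) := by
    intro p hp
    have hp1 : (1 : ℝ) < p := by exact_mod_cast Nat.one_lt_of_mem_primesBelow hp
    exact add_nonneg zero_le_one (div_nonneg (by positivity) (by linarith))
  calc _ ≤ ∏ p ∈ q.primesBelow, (1 - 1 / (p : ℝ))⁻¹ * exp (exp 1 / log q * (log p / p)) :=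
        hsum.trans_le (prod_le_prod hnonneg fun p hp => one_add_rpow_div_le hp)
    _ = (∏ p ∈ q.primesBelow, exp (exp 1 / log q * (log p / p))) * (sieveDensity q)⁻¹ := by
        rw [prod_mul_distrib, prod_inv_distrib, mul_comm, sieveDensity]
    _ ≤ exp (2 * exp 1) * (sieveDensity q)⁻¹ := by
        have := (sieveDensity_pos q).le
        gcongr
        exact prod_exp_mul_log_div_le (Real.exp_pos 1).le q

theorem exp_le_prod_rpow {q : ℕ} (hq : 2 ≤ q) {T : Finset ℕ} {k : ℕ} (hT : q ^ k < ∏ p ∈ T, p) :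
    exp k ≤ ∏ p ∈ T, (p : ℝ) ^ (1 / log q) := by
  have hlq : 0 < log q := Real.log_pos (by exact_mod_cast hq)
  have hT' : (q : ℝ) ^ k ≤ ∏ p ∈ T, (p : ℝ) := by
    rw [← Nat.cast_pow, ← Nat.cast_prod]
    exact Nat.cast_le.2 hT.le
  rw [Real.finsetProd_rpow _ _ fun p _ => p.cast_nonneg]
  calc exp k = ((q : ℝ) ^ k) ^ (1 / log q) := by
        rw [Real.rpow_def_of_pos (by positivity), Real.log_pow, mul_assoc,
          mul_one_div_cancel hlq.ne', mul_one]
    _ ≤ (∏ p ∈ T, (p : ℝ)) ^ (1 / log q) := by gcongr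

theorem sum_selbergWeight_notMem_selbergSupport_le {q : ℕ} (hq : 2 ≤ q) :
    ∑ T ∈ q.primesBelow.powerset with ¬ ∏ p ∈ T, p ≤ q ^ 10, selbergWeight T ≤
      1 / 2 * (sieveDensity q)⁻¹ := by
  have hweight : ∀ T ∈ q.primesBelow.powerset, 0 ≤ selbergWeight T := fun T hT =>
    selbergWeight_nonneg fun p hp => Nat.prime_of_mem_primesBelow (mem_powerset.1 hT hp)
  have hexp : exp (-10) * exp (2 * exp 1) ≤ 1 / 2 := by
    rw [← Real.exp_add]
    calc exp (-10 + 2 * exp 1) ≤ exp (-1) :=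
          Real.exp_le_exp.2 (by linarith [Real.exp_one_lt_d9])
      _ ≤ 1 / 2 := by
          rw [Real.exp_neg, one_div]
          exact inv_anti₀ (by norm_num) (by linarith [Real.exp_one_gt_d9])
  calc ∑ T ∈ q.primesBelow.powerset with ¬ ∏ p ∈ T, p ≤ q ^ 10, selbergWeight T
      ≤ ∑ T ∈ q.primesBelow.powerset with ¬ ∏ p ∈ T, p ≤ q ^ 10,
          exp (-10) * ((∏ p ∈ T, (p : ℝ) ^ (1 / log q)) * selbergWeight T) := by
        refine sum_le_sum fun T hT => ?_
        have hlarge := exp_le_prod_rpow hq (not_le.1 (mem_filter.1 hT).2)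
        have h := mul_le_mul_of_nonneg_left hlarge (Real.exp_pos (-10)).le
        rw [Nat.cast_ofNat, ← Real.exp_add, neg_add_cancel, Real.exp_zero] at h
        rw [← mul_assoc]
        exact le_mul_of_one_le_left (hweight T (mem_filter.1 hT).1) h
    _ ≤ exp (-10) * ∑ T ∈ q.primesBelow.powerset,
          (∏ p ∈ T, (p : ℝ) ^ (1 / log q)) * selbergWeight T := by
        rw [← mul_sum]
        refine mul_le_mul_of_nonneg_left (sum_le_sum_of_subset_of_nonneg (filter_subset _ _)
          fun T hT _ => mul_nonneg ?_ (hweight T hT)) (Real.exp_pos _).le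
        exact prod_nonneg fun p _ => by positivity
    _ ≤ exp (-10) * (exp (2 * exp 1) * (sieveDensity q)⁻¹) := by
        gcongr
        exact sum_powerset_prod_rpow_mul_selbergWeight_le q
    _ ≤ 1 / 2 * (sieveDensity q)⁻¹ := by
        rw [← mul_assoc]
        exact mul_le_mul_of_nonneg_right hexp (inv_nonneg.2 (sieveDensity_pos q).le)

theorem half_mul_sieveDensity_inv_le_selbergSum {q : ℕ} (hq : 2 ≤ q) :
    1 / 2 * (sieveDensity q)⁻¹ ≤ selbergSum q.primesBelow (q ^ 10) := by
  have hsplit := sum_filter_add_sum_filter_not q.primesBelow.powerset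
    (fun T => ∏ p ∈ T, p ≤ q ^ 10) selbergWeight
  rw [← sieveDensity_inv_eq_sum_selbergWeight] at hsplit
  have htail := sum_selbergWeight_notMem_selbergSupport_le hq
  rw [selbergSum, selbergSupport]
  linarith

theorem abs_card_Icc_ceil_floor_sub_le {u v : ℝ} (hu : 0 ≤ u) (huv : u ≤ v) :
    |(#(Icc ⌈u⌉₊ ⌊v⌋₊) : ℝ) - (v - u)| ≤ 1 := by
  have hle : ⌈u⌉₊ ≤ ⌊v⌋₊ + 1 := by
    rw [Nat.ceil_le]
    push_cast
    linarith [Nat.lt_floor_add_one v]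
  rw [Nat.card_Icc, Nat.cast_sub hle, Nat.cast_add_one]
  have h1 := Nat.lt_floor_add_one v
  have h2 := Nat.floor_le (hu.trans huv)
  have h3 := Nat.le_ceil u
  have h4 := Nat.ceil_lt_add_one hu
  rw [abs_le]
  constructor <;> linarith

theorem multiplesEquidistributed_Icc {u v : ℝ} (hu : 0 ≤ u) (huv : u ≤ v) :
    MultiplesEquidistributed (Icc ⌈u⌉₊ ⌊v⌋₊) (v - u) := by
  intro m hm
  have hm0 : (0 : ℝ) < m := by exact_mod_cast hm
  have hv : 0 ≤ v := hu.trans huv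
  have himage : {n ∈ Icc ⌈u⌉₊ ⌊v⌋₊ | m ∣ n} = (Icc ⌈u / m⌉₊ ⌊v / m⌋₊).image (m * ·) := by
    ext n
    simp only [mem_filter, mem_Icc, mem_image, Nat.ceil_le, Nat.le_floor_iff hv,
      Nat.le_floor_iff (div_nonneg hv hm0.le), div_le_iff₀' hm0, le_div_iff₀' hm0]
    constructor
    · rintro ⟨hn, j, rfl⟩
      exact ⟨j, by simpa only [Nat.cast_mul] using hn, rfl⟩
    · rintro ⟨j, hj, rfl⟩
      exact ⟨by simpa only [Nat.cast_mul] using hj, dvd_mul_right m j⟩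
  rw [himage, card_image_of_injective _ (mul_right_injective₀ (Nat.pos_iff_ne_zero.1 hm)), sub_div]
  exact abs_card_Icc_ceil_floor_sub_le (by positivity) (by gcongr)

theorem card_sifted_Icc_le {q : ℕ} (hq : 2 ≤ q) {u L : ℝ} (hu : 0 ≤ u) (hL : (q : ℝ) ^ 61 ≤ L) :
    (#{n ∈ Icc ⌈u⌉₊ ⌊u + L⌋₊ | ∀ p ∈ q.primesBelow, ¬ p ∣ n} : ℝ) ≤ 3 * L * sieveDensity q := by
  have hL0 : 0 < L := lt_of_lt_of_le (by positivity) hL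
  have hV := sieveDensity_pos q
  have hequi := multiplesEquidistributed_Icc hu (le_add_of_nonneg_right hL0.le)
  rw [add_sub_cancel_left] at hequi
  have hmain : L / selbergSum q.primesBelow (q ^ 10) ≤ 2 * L * sieveDensity q := calc
    L / selbergSum q.primesBelow (q ^ 10) ≤ L / (1 / 2 * (sieveDensity q)⁻¹) := by
      gcongr
      exact half_mul_sieveDensity_inv_le_selbergSum hq
    _ = 2 * L * sieveDensity q := by field_simp
  have herror : ((q ^ 10 : ℕ) : ℝ) ^ 6 ≤ L * sieveDensity q := by
    obtain ⟨r, rfl⟩ : ∃ r, q = r + 1 := ⟨q - 1, by lia⟩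
    have hr : (0 : ℝ) < r := by exact_mod_cast (by lia : 0 < r)
    calc (((r + 1) ^ 10 : ℕ) : ℝ) ^ 6 = ((r + 1 : ℕ) : ℝ) ^ 61 * (1 / (r + 1 : ℕ)) := by
          push_cast
          field_simp
      _ ≤ L * (1 / r) := by
          gcongr
          exact Nat.le_succ r
      _ ≤ L * sieveDensity (r + 1) := by
          gcongr
          exact one_div_le_sieveDensity_succ (by lia)
  have hsieve := hequi.card_sifted_le (P := q.primesBelow)
    (fun p hp => Nat.prime_of_mem_primesBelow hp)
    (Nat.one_le_pow 10 q (by lia))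
  linarith

theorem card_le_of_rough_cofactor {q : ℕ} (hq : 2 ≤ q) {X Y : ℝ} (hX : 0 ≤ X) {m : ℕ}
    (hm : (q : ℝ) ^ 61 ≤ Y / m) {S : Finset ℕ} (hSXY : ∀ n ∈ S, (n : ℝ) ∈ Set.Icc X (X + Y))
    (hdvd : ∀ n ∈ S, m ∣ n) (hrough : ∀ n ∈ S, ∀ p ∈ q.primesBelow, ¬ p ∣ n / m) :
    (#S : ℝ) ≤ 3 * (Y / m) * sieveDensity q := by
  have hm0 : 0 < m := by
    rw [pos_iff_ne_zero]
    rintro rfl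
    rw [Nat.cast_zero, div_zero] at hm
    exact hm.not_gt (by positivity)
  have hm0' : (0 : ℝ) < m := by exact_mod_cast hm0
  have hYm : 0 ≤ Y / m := le_trans (by positivity) hm
  refine le_trans ?_ (card_sifted_Icc_le hq (div_nonneg hX hm0'.le) hm)
  rw [Nat.cast_le, ← add_div]
  refine card_le_card_of_injOn (· / m) (fun n hn => ?_) fun a ha b hb hab => ?_
  · have hn' : (n : ℝ) ∈ Set.Icc X (X + Y) := hSXY n hn
    refine mem_coe.2 (mem_filter.2 ⟨mem_Icc.2 ?_, hrough n hn⟩)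
    rw [Nat.ceil_le, Nat.le_floor_iff (by rw [add_div]; positivity),
      Nat.cast_div (hdvd n hn) hm0'.ne']
    exact ⟨by gcongr; exact hn'.1, by gcongr; exact hn'.2⟩
  · exact (Nat.div_left_inj (hdvd a ha) (hdvd b hb)).1 hab

/-! ### Smooth parts -/

/-- The largest divisor of `n` all of whose prime factors are less than `q`
(for `n = 0`, the value is `1`). -/
def smoothPart (q n : ℕ) : ℕ :=
  ∏ p ∈ q.primesBelow, p ^ n.factorization p

section

variable {q n : ℕ}

theorem smoothPart_pos (q n : ℕ) : 0 < smoothPart q n :=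
  prod_pos fun _ hp => pow_pos (Nat.prime_of_mem_primesBelow hp).pos _

theorem smoothPart_zero_left (n : ℕ) : smoothPart 0 n = 1 := by
  rw [smoothPart, Nat.primesBelow_zero, prod_empty]

theorem smoothPart_succ (q n : ℕ) :
    smoothPart (q + 1) n =
      if q.Prime then q ^ n.factorization q * smoothPart q n else smoothPart q n := by
  unfold smoothPart
  rw [Nat.primesBelow_succ]
  split_ifs
  · rw [prod_insert (Nat.notMem_primesBelow q)]
  · rfl

theorem smoothPart_dvd (q n : ℕ) : smoothPart q n ∣ n := by
  refine prod_dvd_of_isRelPrime (fun p hp r hr hpr => ?_) fun p _ => Nat.ordProj_dvd n p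
  exact Nat.coprime_iff_isRelPrime.1 (((Nat.coprime_primes (Nat.prime_of_mem_primesBelow hp)
    (Nat.prime_of_mem_primesBelow hr)).2 hpr).pow _ _)

theorem lt_of_prime_of_dvd_smoothPart {p : ℕ} (hp : p.Prime) (hdvd : p ∣ smoothPart q n) :
    p < q := by
  obtain ⟨r, hr, hpr⟩ := (hp.prime.dvd_finsetProd_iff _).1 hdvd
  rw [(Nat.prime_dvd_prime_iff_eq hp (Nat.prime_of_mem_primesBelow hr)).1 (hp.dvd_of_dvd_pow hpr)]
  exact Nat.lt_of_mem_primesBelow hr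

theorem smoothPart_mem_smoothNumbers (q n : ℕ) : smoothPart q n ∈ Nat.smoothNumbers q :=
  Nat.mem_smoothNumbers'.2 fun _ => lt_of_prime_of_dvd_smoothPart

theorem not_dvd_div_smoothPart (hn : n ≠ 0) {p : ℕ} (hp : p ∈ q.primesBelow) :
    ¬ p ∣ n / smoothPart q n := by
  intro hdvd
  have hmul : smoothPart q n * p ∣ n := (Nat.dvd_div_iff_mul_dvd (smoothPart_dvd q n)).1 hdvd
  have hpow : p ^ n.factorization p ∣ smoothPart q n :=
    dvd_prod_of_mem (fun p => p ^ n.factorization p) hp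
  refine Nat.pow_succ_factorization_not_dvd hn (Nat.prime_of_mem_primesBelow hp) ?_
  rw [pow_succ]
  exact (mul_dvd_mul_right hpow p).trans hmul

theorem coprime_smoothPart_div_smoothPart (hn : n ≠ 0) :
    Nat.Coprime (smoothPart q n) (n / smoothPart q n) :=
  Nat.coprime_of_dvd fun _ hp hdvd => not_dvd_div_smoothPart hn
    (Nat.mem_primesBelow.2 ⟨lt_of_prime_of_dvd_smoothPart hp hdvd, hp⟩)

theorem smoothPart_mul_dvd (hq : q.Prime) (hdvd : q ∣ n) : smoothPart q n * q ∣ n := by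
  refine Nat.Coprime.mul_dvd_of_dvd_of_dvd ?_ (smoothPart_dvd q n) hdvd
  rw [Nat.coprime_comm, hq.coprime_iff_not_dvd]
  exact fun hself => (lt_of_prime_of_dvd_smoothPart hq hself).false

theorem exists_prime_smoothPart_le_lt {z : ℝ} (hz : 1 ≤ z) {Q : ℕ}
    (hlt : z < smoothPart Q n) :
    ∃ q : ℕ, q.Prime ∧ q < Q ∧ q ∣ n ∧ (smoothPart q n : ℝ) ≤ z ∧
      z < (q : ℝ) ^ n.factorization q * smoothPart q n := by
  induction Q with
  | zero =>
    rw [smoothPart_zero_left, Nat.cast_one] at hlt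
    exact absurd hz hlt.not_ge
  | succ Q ih =>
    by_cases hQn : z < smoothPart Q n
    · obtain ⟨q, hq, hqQ, hrest⟩ := ih hQn
      exact ⟨q, hq, hqQ.trans (Nat.lt_succ_self Q), hrest⟩
    rw [smoothPart_succ] at hlt
    split_ifs at hlt with hQ
    · rw [Nat.cast_mul, Nat.cast_pow] at hlt
      refine ⟨Q, hQ, Nat.lt_succ_self Q, ?_, not_lt.1 hQn, hlt⟩
      by_contra hdvd
      rw [Nat.factorization_eq_zero_of_not_dvd hdvd, pow_zero, one_mul] at hlt
      exact hQn hlt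
    · exact absurd hlt hQn

end

/-! ### The expected mean value -/

/-- The Euler product `∏_{p < N} (1 + (g p - 1) / p)`, which is the expected order of magnitude
of the mean value of a multiplicative function `g` on the integers of size about `N`. -/
noncomputable def meanValue (g : ℕ → ℝ) (N : ℕ) : ℝ :=
  ∏ p ∈ N.primesBelow, (1 + (g p - 1) / (p : ℝ))

section

variable {g : ℕ → ℝ}

theorem one_sub_one_div_le_one_add_div (hg : ∀ n, 0 ≤ g n) (p : ℕ) :
    1 - 1 / (p : ℝ) ≤ 1 + (g p - 1) / p := by
  rw [sub_div]
  linarith [div_nonneg (hg p) p.cast_nonneg]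

theorem sieveDensity_le_meanValue (hg : ∀ n, 0 ≤ g n) (N : ℕ) :
    sieveDensity N ≤ meanValue g N :=
  prod_le_prod (fun p _ => (one_sub_one_div_mem_Icc_zero_one p).1)
    fun p _ => one_sub_one_div_le_one_add_div hg p

theorem meanValue_pos (hg : ∀ n, 0 ≤ g n) (N : ℕ) : 0 < meanValue g N :=
  (sieveDensity_pos N).trans_le (sieveDensity_le_meanValue hg N)

theorem sieveDensity_mul_prod_one_add_le_meanValue (hg : ∀ n, 0 ≤ g n) (q : ℕ) :
    sieveDensity q * ∏ p ∈ q.primesBelow, (1 + g p / p) ≤ meanValue g q := by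
  rw [sieveDensity, ← prod_mul_distrib]
  refine prod_le_prod (fun p _ => ?_) fun p _ => ?_
  · exact mul_nonneg (one_sub_one_div_mem_Icc_zero_one p).1
      (add_nonneg zero_le_one (div_nonneg (hg p) p.cast_nonneg))
  · have hcross : 0 ≤ 1 / (p : ℝ) * (g p / p) :=
      mul_nonneg (by positivity) (div_nonneg (hg p) p.cast_nonneg)
    rw [sub_div]
    linarith

theorem meanValue_mul_prod_le (hg : ∀ n, 0 ≤ g n) {q N : ℕ} (hqN : q ≤ N) :
    meanValue g q * ∏ p ∈ N.primesBelow with q ≤ p, (1 - 1 / (p : ℝ)) ≤ meanValue g N := by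
  have hbelow : {p ∈ N.primesBelow | ¬ q ≤ p} = q.primesBelow := by
    ext p
    rw [mem_filter, Nat.mem_primesBelow, Nat.mem_primesBelow, not_le]
    exact ⟨fun h => ⟨h.2, h.1.2⟩, fun h => ⟨⟨h.1.trans_le hqN, h.2⟩, h.1⟩⟩
  have hsplit := prod_filter_mul_prod_filter_not N.primesBelow (q ≤ ·)
    fun p => 1 + (g p - 1) / (p : ℝ)
  rw [hbelow, mul_comm] at hsplit
  rw [meanValue, meanValue, ← hsplit]
  exact mul_le_mul_of_nonneg_left
    (prod_le_prod (fun p _ => (one_sub_one_div_mem_Icc_zero_one p).1)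
      fun p _ => one_sub_one_div_le_one_add_div hg p) (meanValue_pos hg q).le

theorem sieveDensity_mul_prod_one_add_le_exp_mul_meanValue (hg : ∀ n, 0 ≤ g n) {q N : ℕ}
    (hq : 2 ≤ q) (hqN : q ≤ N) :
    sieveDensity q * ∏ p ∈ q.primesBelow, (1 + g p / p) ≤
      exp (4 * log N / log q) * meanValue g N := by
  refine (sieveDensity_mul_prod_one_add_le_meanValue hg q).trans ?_
  rw [← inv_mul_le_iff₀ (Real.exp_pos _), ← Real.exp_neg, mul_comm]
  exact (mul_le_mul_of_nonneg_left (exp_neg_le_prod_one_sub_one_div hq N)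
    (meanValue_pos hg q).le).trans (meanValue_mul_prod_le hg hqN)

theorem log_floor_add_one_le {x : ℝ} (hx : 2 ≤ x) : log (⌊x⌋₊ + 1 : ℕ) ≤ 2 * log x := by
  have hfloor := Nat.floor_le (zero_le_two.trans hx)
  calc log (⌊x⌋₊ + 1 : ℕ) ≤ log (x ^ 2) := by
        refine Real.log_le_log (by positivity) ?_
        push_cast
        nlinarith
    _ = 2 * log x := by rw [Real.log_pow, Nat.cast_ofNat]

theorem exists_mul_rpow_neg_le_meanValue {η : ℝ} (hη : 0 < η) :
    ∃ c : ℝ, 0 < c ∧ ∀ g : ℕ → ℝ, (∀ n, 0 ≤ g n) → ∀ x : ℝ, 2 ≤ x →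
      c * x ^ (-η) ≤ meanValue g (⌊x⌋₊ + 1) := by
  obtain ⟨c, hc, hlower⟩ := exists_mul_rpow_neg_le_sieveDensity (half_pos hη)
  refine ⟨c, hc, fun g hg x hx => ?_⟩
  refine le_trans ?_ ((hlower _ (Nat.le_add_left 1 _)).trans (sieveDensity_le_meanValue hg _))
  refine mul_le_mul_of_nonneg_left ?_ hc.le
  rw [Real.rpow_def_of_pos (by linarith), Real.rpow_def_of_pos (by positivity)]
  refine Real.exp_le_exp.2 ?_
  linarith [mul_le_mul_of_nonneg_right (log_floor_add_one_le hx) hη.le]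

end

/-! ### Sieving by the primes below `q` -/

section

variable {α β θ : ℝ} {g : ℕ → ℝ} {q k : ℕ} {X Y : ℝ} {S : Finset ℕ}

theorem IsShiuFunction.le_map_smoothPart_mul_rpow (hg : IsShiuFunction α β θ g) (hα : 1 ≤ α)
    (hq : 2 ≤ q) {n : ℕ} (hn : n ≠ 0) :
    g n ≤ g (smoothPart q n) * (n : ℝ) ^ (log α / log q) := by
  have hlq : 0 < log q := Real.log_pos (by exact_mod_cast hq)
  have hlα : 0 ≤ log α := Real.log_nonneg hα
  have hfactor : g n = g (smoothPart q n) * g (n / smoothPart q n) := by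
    rw [← hg.map_mul_of_coprime _ _ (coprime_smoothPart_div_smoothPart hn),
      Nat.mul_div_cancel' (smoothPart_dvd q n)]
  have hcofactor : n / smoothPart q n ≠ 0 :=
    (Nat.div_pos (Nat.le_of_dvd (Nat.pos_of_ne_zero hn) (smoothPart_dvd q n))
      (smoothPart_pos q n)).ne'
  have hrough : g (n / smoothPart q n) ≤ ((n / smoothPart q n : ℕ) : ℝ) ^ (log α / log q) :=
    hg.le_rpow_of_le_primeFactors hα hq hcofactor fun p hp hdvd => not_lt.1 fun hpq =>
      not_dvd_div_smoothPart hn (Nat.mem_primesBelow.2 ⟨hpq, hp⟩) hdvd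
  rw [hfactor]
  refine mul_le_mul_of_nonneg_left (hrough.trans ?_) (hg.nonneg _)
  gcongr
  exact Nat.div_le_self _ _

theorem card_fiber_smoothPart_le (hq : 2 ≤ q) (hX : 0 < X)
    (hSXY : ∀ n ∈ S, (n : ℝ) ∈ Set.Icc X (X + Y)) (hdvd : ∀ n ∈ S, smoothPart q n * k ∣ n) {b : ℕ}
    (hb : (q : ℝ) ^ 61 ≤ Y / (b * k : ℕ)) :
    (#{n ∈ S | smoothPart q n = b} : ℝ) ≤ 3 * (Y / (b * k : ℕ)) * sieveDensity q := by
  refine card_le_of_rough_cofactor hq hX.le hb (fun n hn => hSXY n (filter_subset _ _ hn))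
    (fun n hn => ?_) fun n hn p hp hpn => ?_
  all_goals obtain ⟨hnS, rfl⟩ := mem_filter.1 hn
  · exact hdvd n hnS
  · have hn0 : n ≠ 0 := by
      rintro rfl
      exact hX.not_ge (by simpa only [Nat.cast_zero] using (hSXY 0 hnS).1)
    refine not_dvd_div_smoothPart hn0 hp (hpn.trans ?_)
    rw [← Nat.div_div_eq_div_mul]
    exact Nat.div_dvd_of_dvd ((Nat.dvd_div_iff_mul_dvd (smoothPart_dvd q n)).2 (hdvd n hnS))

theorem IsShiuFunction.sum_le_mul_sum_image_smoothPart (hg : IsShiuFunction α β θ g) (hα : 1 ≤ α)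
    (hq : 2 ≤ q) (hX : 2 ≤ X) (hYX : Y ≤ X) (hk : 1 ≤ k)
    (hSXY : ∀ n ∈ S, (n : ℝ) ∈ Set.Icc X (X + Y)) (hdvd : ∀ n ∈ S, smoothPart q n * k ∣ n)
    (hlevel : ∀ n ∈ S, (q : ℝ) ^ 61 * (k * smoothPart q n) ≤ Y) :
    ∑ n ∈ S, g n ≤ (X ^ 2) ^ (log α / log q) * (3 * (Y / k) * sieveDensity q) *
      ∑ b ∈ S.image (smoothPart q), g b / b := by
  have hlq : 0 < log q := Real.log_pos (by exact_mod_cast hq)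
  have hlα : 0 ≤ log α := Real.log_nonneg hα
  have hk0 : (0 : ℝ) < k := by exact_mod_cast hk
  rw [← sum_fiberwise_of_maps_to fun n hn => mem_image_of_mem (smoothPart q) hn, mul_sum]
  refine sum_le_sum fun b hb => ?_
  obtain ⟨m, hm, rfl⟩ := mem_image.1 hb
  set b := smoothPart q m
  have hb0 : (0 : ℝ) < b := by exact_mod_cast smoothPart_pos q m
  have hpointwise : ∀ n ∈ S.filter (smoothPart q · = b),
      g n ≤ g b * (X ^ 2) ^ (log α / log q) := by
    intro n hn
    obtain ⟨hnS, hnb⟩ := mem_filter.1 hn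
    obtain ⟨hXn, hnXY⟩ := hSXY n hnS
    have hn0 : (n : ℝ) ≠ 0 := by linarith
    rw [← hnb]
    refine (hg.le_map_smoothPart_mul_rpow hα hq (Nat.cast_ne_zero.1 hn0)).trans
      (mul_le_mul_of_nonneg_left ?_ (hg.nonneg _))
    gcongr
    nlinarith
  have hcard := card_fiber_smoothPart_le (b := b) hq (by linarith) hSXY hdvd (by
    rw [Nat.cast_mul, le_div_iff₀ (mul_pos hb0 hk0), mul_comm (b : ℝ)]
    exact hlevel m hm)
  calc ∑ n ∈ S with smoothPart q n = b, g n
      ≤ #{n ∈ S | smoothPart q n = b} * (g b * (X ^ 2) ^ (log α / log q)) := by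
        rw [← nsmul_eq_mul]
        exact sum_le_card_nsmul _ _ _ hpointwise
    _ ≤ 3 * (Y / (b * k : ℕ)) * sieveDensity q * (g b * (X ^ 2) ^ (log α / log q)) :=
        mul_le_mul_of_nonneg_right hcard (mul_nonneg (hg.nonneg b) (by positivity))
    _ = (X ^ 2) ^ (log α / log q) * (3 * (Y / k) * sieveDensity q) * (g b / b) := by
        push_cast
        field_simp

theorem IsShiuFunction.sum_div_le_of_le (hg : IsShiuFunction α β θ g) {κ K Z : ℝ}
    (hκ : 0 ≤ κ) (hθκ : θ + κ ≤ 1 / 4) (hK : κ * log q ≤ K) (hZ : 0 < Z) {B : Finset ℕ}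
    (hB : ∀ b ∈ B, b ∈ Nat.smoothNumbers q) (hBZ : ∀ b ∈ B, Z ≤ b) :
    ∑ b ∈ B, g b / b ≤
      Z ^ (-κ) * (rankinConstant α β K * ∏ p ∈ q.primesBelow, (1 + g p / p)) := by
  refine le_trans ?_ (mul_le_mul_of_nonneg_left (hg.sum_mul_rpow_le hκ hθκ hK hB) (by positivity))
  rw [mul_sum]
  refine sum_le_sum fun b hb => ?_
  have hb0 : (0 : ℝ) < b := hZ.trans_le (hBZ b hb)
  have hshift : 1 ≤ Z ^ (-κ) * (b : ℝ) ^ κ := by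
    rw [Real.rpow_neg hZ.le, inv_mul_eq_div, one_le_div (by positivity)]
    gcongr
    exact hBZ b hb
  calc g b / b ≤ Z ^ (-κ) * (b : ℝ) ^ κ * (g b / b) :=
        le_mul_of_one_le_left (div_nonneg (hg.nonneg b) hb0.le) hshift
    _ = Z ^ (-κ) * (g b * (b : ℝ) ^ (κ - 1)) := by
        rw [Real.rpow_sub hb0, Real.rpow_one]
        ring

theorem sq_rpow_div_eq_exp {x : ℝ} (hx : 0 < x) (a b : ℝ) :
    (x ^ 2) ^ (a / b) = exp (2 * a * log x / b) := by
  rw [Real.rpow_def_of_pos (by positivity), Real.log_pow]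
  push_cast
  ring_nf

theorem sieveDensity_mul_prod_one_add_le_exp_mul_meanValue_floor (hg : ∀ n, 0 ≤ g n) (hq : 2 ≤ q)
    (hqX : q ≤ X) :
    sieveDensity q * ∏ p ∈ q.primesBelow, (1 + g p / p) ≤
      exp (8 * log X / log q) * meanValue g (⌊X⌋₊ + 1) := by
  have hlq : 0 < log q := Real.log_pos (by exact_mod_cast hq)
  have hlog := log_floor_add_one_le (x := X) (le_trans (by exact_mod_cast hq) hqX)
  refine (sieveDensity_mul_prod_one_add_le_exp_mul_meanValue hg hq
    ((Nat.le_floor hqX).trans (Nat.le_succ _))).trans (mul_le_mul_of_nonneg_right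
      (Real.exp_le_exp.2 (div_le_div_of_nonneg_right ?_ hlq.le)) (meanValue_pos hg _).le)
  linarith

theorem IsShiuFunction.sum_le_of_le_smoothPart (hg : IsShiuFunction α β θ g) (hα : 1 ≤ α)
    (hq : 2 ≤ q) (hqX : q ≤ X) (hY : 0 ≤ Y) (hYX : Y ≤ X) (hk : 1 ≤ k)
    (hSXY : ∀ n ∈ S, (n : ℝ) ∈ Set.Icc X (X + Y)) (hdvd : ∀ n ∈ S, smoothPart q n * k ∣ n)
    (hlevel : ∀ n ∈ S, (q : ℝ) ^ 61 * (k * smoothPart q n) ≤ Y) {κ K Z : ℝ} (hκ : 0 ≤ κ)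
    (hθκ : θ + κ ≤ 1 / 4) (hK : κ * log q ≤ K) (hZ : 0 < Z)
    (hSZ : ∀ n ∈ S, Z ≤ smoothPart q n) :
    ∑ n ∈ S, g n ≤ 3 * rankinConstant α β K * (Y / k) *
      (exp ((2 * log α + 8) * log X / log q) * Z ^ (-κ)) * meanValue g (⌊X⌋₊ + 1) := by
  have hX : 2 ≤ X := le_trans (by exact_mod_cast hq) hqX
  have hC := (rankinConstant_pos α β K).le
  have hV := (sieveDensity_pos q).le
  set C := rankinConstant α β K
  have hrankin : ∑ b ∈ S.image (smoothPart q), g b / b ≤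
      Z ^ (-κ) * (C * ∏ p ∈ q.primesBelow, (1 + g p / p)) :=
    hg.sum_div_le_of_le hκ hθκ hK hZ (forall_mem_image.2 fun n _ =>
      smoothPart_mem_smoothNumbers q n) (forall_mem_image.2 hSZ)
  have hproduct := sieveDensity_mul_prod_one_add_le_exp_mul_meanValue_floor hg.nonneg hq hqX
  calc ∑ n ∈ S, g n ≤ (X ^ 2) ^ (log α / log q) * (3 * (Y / k) * sieveDensity q) *
        ∑ b ∈ S.image (smoothPart q), g b / b :=
        hg.sum_le_mul_sum_image_smoothPart hα hq hX hYX hk hSXY hdvd hlevel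
    _ ≤ (X ^ 2) ^ (log α / log q) * (3 * (Y / k) * sieveDensity q) *
        (Z ^ (-κ) * (C * ∏ p ∈ q.primesBelow, (1 + g p / p))) := by gcongr
    _ = 3 * C * (Y / k) * ((X ^ 2) ^ (log α / log q) * Z ^ (-κ)) *
        (sieveDensity q * ∏ p ∈ q.primesBelow, (1 + g p / p)) := by ring
    _ ≤ 3 * C * (Y / k) * ((X ^ 2) ^ (log α / log q) * Z ^ (-κ)) *
        (exp (8 * log X / log q) * meanValue g (⌊X⌋₊ + 1)) := by gcongr
    _ = 3 * C * (Y / k) * (exp ((2 * log α + 8) * log X / log q) * Z ^ (-κ)) *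
        meanValue g (⌊X⌋₊ + 1) := by
        rw [sq_rpow_div_eq_exp (by linarith), add_mul, add_div, Real.exp_add]
        ring

end

/-! ### Integers with an exceptional smooth divisor -/

section

variable {X Y z : ℝ} {S : Finset ℕ}

theorem card_le_of_forall_dvd (hX : 0 ≤ X) {m : ℕ} (hm : 0 < m) (hmY : m ≤ Y)
    (hSXY : ∀ n ∈ S, (n : ℝ) ∈ Set.Icc X (X + Y)) (hdvd : ∀ n ∈ S, m ∣ n) :
    (#S : ℝ) ≤ 2 * (Y / m) := by
  have hY : 0 ≤ Y := m.cast_nonneg.trans hmY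
  have hsubset : S ⊆ {n ∈ Icc ⌈X⌉₊ ⌊X + Y⌋₊ | m ∣ n} := fun n hn => by
    rw [mem_filter, mem_Icc, Nat.ceil_le, Nat.le_floor_iff (add_nonneg hX hY)]
    exact ⟨hSXY n hn, hdvd n hn⟩
  have hcount := multiplesEquidistributed_Icc hX (le_add_of_nonneg_right hY) m hm
  rw [add_sub_cancel_left] at hcount
  have hone : 1 ≤ Y / m := by rwa [one_le_div (by exact_mod_cast hm)]
  have hcard : (#S : ℝ) ≤ #{n ∈ Icc ⌈X⌉₊ ⌊X + Y⌋₊ | m ∣ n} := by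
    exact_mod_cast card_le_card hsubset
  linarith [(abs_le.1 hcount).2]

theorem card_le_of_lt_ordProj (hX : 0 ≤ X) {q : ℕ} (hq : 1 < q) (hz : 1 ≤ z)
    (hzq : z * q ≤ Y) (hSXY : ∀ n ∈ S, (n : ℝ) ∈ Set.Icc X (X + Y))
    (hlt : ∀ n ∈ S, z < (q : ℝ) ^ n.factorization q) :
    (#S : ℝ) ≤ 2 * (Y / z) := by
  have hq1 : (1 : ℝ) < q := by exact_mod_cast hq
  obtain ⟨u, hqu, hzu⟩ := exists_nat_pow_near hz hq1
  have hquY : ((q ^ (u + 1) : ℕ) : ℝ) ≤ Y := by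
    rw [Nat.cast_pow, pow_succ]
    exact le_trans (by gcongr) hzq
  have hY : 0 ≤ Y := (Nat.cast_nonneg _).trans hquY
  have hdvd : ∀ n ∈ S, q ^ (u + 1) ∣ n := fun n hn =>
    (pow_dvd_pow q ((pow_lt_pow_iff_right₀ hq1).1 (hqu.trans_lt (hlt n hn)))).trans
      (Nat.ordProj_dvd n q)
  calc (#S : ℝ) ≤ 2 * (Y / (q ^ (u + 1) : ℕ)) :=
        card_le_of_forall_dvd hX (by positivity) hquY hSXY hdvd
    _ ≤ 2 * (Y / z) := by
        rw [Nat.cast_pow]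
        gcongr

theorem card_le_of_exists_lt_ordProj (hX : 0 ≤ X) {Q : ℕ} (hz : 1 ≤ z) (hzQ : z * Q ≤ Y)
    (hSXY : ∀ n ∈ S, (n : ℝ) ∈ Set.Icc X (X + Y))
    (hlt : ∀ n ∈ S, ∃ q : ℕ, 1 < q ∧ q < Q ∧ z < (q : ℝ) ^ n.factorization q) :
    (#S : ℝ) ≤ Q * (2 * (Y / z)) := by
  choose! q hq1 hqQ hzq using hlt
  rw [card_eq_sum_card_fiberwise (f := q) (t := range Q) fun n hn => by
    exact mem_coe.2 (mem_range.2 (hqQ n hn)), Nat.cast_sum, ← nsmul_eq_mul]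
  conv_rhs => rw [← card_range Q]
  refine sum_le_card_nsmul _ _ _ fun r hr => ?_
  have hrQ : (r : ℝ) ≤ Q := by exact_mod_cast (mem_range.1 hr).le
  rcases {n ∈ S | q n = r}.eq_empty_or_nonempty with hempty | ⟨m, hm⟩
  · rw [hempty, card_empty, Nat.cast_zero]
    have hY : 0 ≤ Y := le_trans (by positivity) hzQ
    positivity
  obtain ⟨hmS, rfl⟩ := mem_filter.1 hm
  refine card_le_of_lt_ordProj hX (hq1 m hmS) hz (le_trans (by gcongr) hzQ)
    (fun n hn => hSXY n (filter_subset _ _ hn)) fun n hn => ?_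
  obtain ⟨hnS, hnq⟩ := mem_filter.1 hn
  rw [← hnq]
  exact hzq n hnS

theorem isShiuFunction_one : IsShiuFunction 1 1 0 1 where
  map_one := rfl
  map_mul_of_coprime _ _ _ := (mul_one 1).symm
  nonneg _ := zero_le_one
  prime_pow_le _ _ _ _ := (one_pow _).ge
  le_rpow _ _ := by rw [Real.rpow_zero, mul_one, Pi.one_apply]

theorem card_le_of_exists_smooth_dvd (hX : 0 ≤ X) (hY : 0 ≤ Y) (hz : 0 < z) (y : ℕ)
    (hSXY : ∀ n ∈ S, (n : ℝ) ∈ Set.Icc X (X + Y))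
    (hdvd : ∀ n ∈ S, ∃ b ∈ Nat.smoothNumbers y, b ∣ n ∧ z ≤ b ∧ b ≤ Y) :
    (#S : ℝ) ≤ 2 * Y * (z ^ (-(1 / 5) : ℝ) *
      (rankinConstant 1 1 (1 / 5 * log y) * ∏ p ∈ y.primesBelow, (1 + 1 / (p : ℝ)))) := by
  choose! b hby hbn hzb hbY using hdvd
  have hfiber : ∀ d ∈ S.image b, (#{n ∈ S | b n = d} : ℝ) ≤ 2 * (Y / d) := by
    refine forall_mem_image.2 fun m hm => ?_
    refine card_le_of_forall_dvd hX ?_ (hbY m hm) (fun n hn => hSXY n (filter_subset _ _ hn))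
      fun n hn => ?_
    · exact_mod_cast hz.trans_le (hzb m hm)
    · obtain ⟨hnS, hnm⟩ := mem_filter.1 hn
      exact hnm ▸ hbn n hnS
  have hrankin := isShiuFunction_one.sum_div_le_of_le (q := y) (κ := 1 / 5) (by norm_num)
    (by norm_num) le_rfl hz (forall_mem_image.2 hby) (forall_mem_image.2 hzb)
  calc (#S : ℝ) = ∑ d ∈ S.image b, (#{n ∈ S | b n = d} : ℝ) := by
        rw [card_eq_sum_card_image b S, Nat.cast_sum]
    _ ≤ ∑ d ∈ S.image b, 2 * (Y / d) := sum_le_sum hfiber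
    _ = 2 * Y * ∑ d ∈ S.image b, (1 : ℕ → ℝ) d / d := by
        rw [mul_sum]
        exact sum_congr rfl fun d _ => by rw [Pi.one_apply]; ring
    _ ≤ _ := by gcongr; exact hrankin

end

/-! ### Integers with a controlled smooth part -/

section

variable {α β θ : ℝ} {g : ℕ → ℝ} {q : ℕ} {B K X Y z : ℝ} {S : Finset ℕ}

theorem IsShiuFunction.sum_le_of_log_le_mul_log (hg : IsShiuFunction α β θ g) (hα : 1 ≤ α)
    (hθ : θ ≤ 1 / 4) (hq : 2 ≤ q) (hqX : q ≤ X) (hY : 0 ≤ Y) (hYX : Y ≤ X)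
    (hB : log X ≤ B * log q) (hSXY : ∀ n ∈ S, (n : ℝ) ∈ Set.Icc X (X + Y))
    (hlevel : ∀ n ∈ S, (q : ℝ) ^ 61 * smoothPart q n ≤ Y) :
    ∑ n ∈ S, g n ≤ 3 * rankinConstant α β 0 * exp ((2 * log α + 8) * B) * Y *
      meanValue g (⌊X⌋₊ + 1) := by
  have hlq : 0 < log q := Real.log_pos (by exact_mod_cast hq)
  have hlα : 0 ≤ log α := Real.log_nonneg hα
  have hC := (rankinConstant_pos α β 0).le
  have hM := (meanValue_pos hg.nonneg (⌊X⌋₊ + 1)).le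
  have hexp : exp ((2 * log α + 8) * log X / log q) ≤ exp ((2 * log α + 8) * B) := by
    rw [mul_div_assoc]
    gcongr
    rwa [div_le_iff₀ hlq]
  calc ∑ n ∈ S, g n ≤ 3 * rankinConstant α β 0 * (Y / (1 : ℕ)) *
        (exp ((2 * log α + 8) * log X / log q) * 1 ^ (-0 : ℝ)) * meanValue g (⌊X⌋₊ + 1) :=
        hg.sum_le_of_le_smoothPart hα hq hqX hY hYX le_rfl hSXY
          (fun n _ => by rw [mul_one]; exact smoothPart_dvd q n)
          (fun n hn => by rw [Nat.cast_one, one_mul]; exact hlevel n hn) le_rfl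
          (by rwa [add_zero]) (zero_mul _).le one_pos
          fun n _ => by exact_mod_cast smoothPart_pos q n
    _ = 3 * rankinConstant α β 0 * exp ((2 * log α + 8) * log X / log q) * Y *
        meanValue g (⌊X⌋₊ + 1) := by
        rw [Real.one_rpow, mul_one, Nat.cast_one, div_one]
        ring
    _ ≤ _ := by gcongr

theorem exp_div_mul_rpow_neg_le {a l : ℝ} (hl : 0 < l) (hz : 1 < z)
    (ha : a + log z ≤ K * log z) : exp (a / l) * z ^ (-(K / l)) ≤ l / log z := by
  have hlz : 0 < log z := Real.log_pos hz
  calc exp (a / l) * z ^ (-(K / l)) = exp ((a - K * log z) / l) := by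
        rw [Real.rpow_def_of_pos (by linarith), ← Real.exp_add]
        ring_nf
    _ ≤ exp (-(log z / l)) := by
        rw [← neg_div]
        gcongr
        linarith
    _ ≤ (log z / l)⁻¹ := by
        rw [Real.exp_neg]
        gcongr
        linarith [Real.add_one_le_exp (log z / l)]
    _ = l / log z := inv_div _ _

theorem IsShiuFunction.sum_le_of_prime_dvd (hg : IsShiuFunction α β θ g) (hα : 1 ≤ α)
    (hθ : θ ≤ 1 / 20) (hq : q.Prime) (hqX : q ≤ X) (hY : 0 ≤ Y) (hYX : Y ≤ X) (hz : 1 < z)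
    (hB : log X ≤ B * log z) (hK : K = (2 * log α + 8) * B + 1) (hKq : 5 * K ≤ log q)
    (hSXY : ∀ n ∈ S, (n : ℝ) ∈ Set.Icc X (X + Y)) (hdvd : ∀ n ∈ S, q ∣ n)
    (hzS : ∀ n ∈ S, z ≤ smoothPart q n)
    (hlevel : ∀ n ∈ S, (q : ℝ) ^ 62 * smoothPart q n ≤ Y) :
    ∑ n ∈ S, g n ≤ 3 * rankinConstant α β K * Y * meanValue g (⌊X⌋₊ + 1) / log z *
      (log q / q) := by
  have hlq : 0 < log q := Real.log_pos (by exact_mod_cast hq.one_lt)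
  have hlz : 0 < log z := Real.log_pos hz
  have hlα : 0 ≤ log α := Real.log_nonneg hα
  have hlX : 0 ≤ log X := Real.log_nonneg (le_trans (by exact_mod_cast hq.one_le) hqX)
  have hK0 : 0 ≤ K := by
    have : 0 ≤ B := nonneg_of_mul_nonneg_left (hlX.trans hB) hlz
    rw [hK]
    positivity
  have hC := (rankinConstant_pos α β K).le
  have hM := (meanValue_pos hg.nonneg (⌊X⌋₊ + 1)).le
  have hκ : K / log q ≤ 1 / 5 := by
    rw [div_le_iff₀ hlq]
    linarith
  have hsaving : exp ((2 * log α + 8) * log X / log q) * z ^ (-(K / log q)) ≤ log q / log z := by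
    refine exp_div_mul_rpow_neg_le hlq hz ?_
    rw [hK, add_one_mul, mul_assoc]
    gcongr
  calc ∑ n ∈ S, g n ≤ 3 * rankinConstant α β K * (Y / q) *
        (exp ((2 * log α + 8) * log X / log q) * z ^ (-(K / log q))) * meanValue g (⌊X⌋₊ + 1) :=
        hg.sum_le_of_le_smoothPart hα hq.two_le hqX hY hYX hq.one_le hSXY
          (fun n hn => smoothPart_mul_dvd hq (hdvd n hn))
          (fun n hn => by rw [← mul_assoc, ← pow_succ]; exact hlevel n hn) (by positivity)
          (by linarith) (div_mul_cancel₀ K hlq.ne').le (by linarith) hzS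
    _ ≤ 3 * rankinConstant α β K * (Y / q) * (log q / log z) * meanValue g (⌊X⌋₊ + 1) := by
        gcongr
    _ = _ := by ring

theorem sum_primesBelow_log_div_le_of_le {Q : ℕ} (hz : 1 ≤ z) (hQz : Q ≤ z) :
    ∑ r ∈ Q.primesBelow, log r / r ≤ 2 * log z := by
  refine (sum_primesBelow_log_div_le Q).trans ?_
  rcases Q.eq_zero_or_pos with rfl | hQ
  · simpa only [Nat.cast_zero, Real.log_zero, mul_zero] using
      mul_nonneg zero_le_two (Real.log_nonneg hz)
  · gcongr

theorem IsShiuFunction.sum_fiber_le_of_prime_dvd (hg : IsShiuFunction α β θ g) (hα : 1 ≤ α)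
    (hθ : θ ≤ 1 / 20) (hY : 0 ≤ Y) (hYX : Y ≤ X) (hz : 1 < z) (hB : log X ≤ B * log z)
    (hK : K = (2 * log α + 8) * B + 1) (hSXY : ∀ n ∈ S, (n : ℝ) ∈ Set.Icc X (X + Y)) {q : ℕ → ℕ}
    (hprime : ∀ n ∈ S, (q n).Prime ∧ q n ≤ X ∧ 5 * K ≤ log (q n) ∧ q n ∣ n ∧
      z ≤ smoothPart (q n) n ∧ (q n : ℝ) ^ 62 * smoothPart (q n) n ≤ Y) (r : ℕ) :
    ∑ n ∈ S with q n = r, g n ≤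
      3 * rankinConstant α β K * Y * meanValue g (⌊X⌋₊ + 1) / log z * (log r / r) := by
  rcases {n ∈ S | q n = r}.eq_empty_or_nonempty with hempty | ⟨m, hm⟩
  · have hlz : 0 < log z := Real.log_pos hz
    have hC := (rankinConstant_pos α β K).le
    have hM := (meanValue_pos hg.nonneg (⌊X⌋₊ + 1)).le
    have hlr := Real.log_natCast_nonneg r
    rw [hempty, sum_empty]
    exact mul_nonneg (by positivity) (div_nonneg hlr r.cast_nonneg)
  obtain ⟨hmS, rfl⟩ := mem_filter.1 hm
  obtain ⟨hq, hqX, hKq, -⟩ := hprime m hmS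
  have hfiber : ∀ n ∈ S.filter (q · = q m), q m ∣ n ∧ z ≤ smoothPart (q m) n ∧
      (q m : ℝ) ^ 62 * smoothPart (q m) n ≤ Y := fun n hn => by
    obtain ⟨hnS, hqn⟩ := mem_filter.1 hn
    rw [← hqn]
    exact (hprime n hnS).2.2.2
  exact hg.sum_le_of_prime_dvd hα hθ hq hqX hY hYX hz hB hK hKq
    (fun n hn => hSXY n (mem_filter.1 hn).1) (fun n hn => (hfiber n hn).1)
    (fun n hn => (hfiber n hn).2.1) fun n hn => (hfiber n hn).2.2

theorem IsShiuFunction.sum_le_of_exists_prime_dvd (hg : IsShiuFunction α β θ g) (hα : 1 ≤ α)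
    (hθ : θ ≤ 1 / 20) {Q : ℕ} (hQX : Q ≤ X) (hY : 0 ≤ Y) (hYX : Y ≤ X) (hz : 1 < z) (hQz : Q ≤ z)
    (hB : log X ≤ B * log z) (hK : K = (2 * log α + 8) * B + 1)
    (hSXY : ∀ n ∈ S, (n : ℝ) ∈ Set.Icc X (X + Y))
    (hprime : ∀ n ∈ S, ∃ q : ℕ, q.Prime ∧ q < Q ∧ 5 * K ≤ log q ∧ q ∣ n ∧
      z ≤ smoothPart q n ∧ (q : ℝ) ^ 62 * smoothPart q n ≤ Y) :
    ∑ n ∈ S, g n ≤ 6 * rankinConstant α β K * Y * meanValue g (⌊X⌋₊ + 1) := by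
  have hlz : 0 < log z := Real.log_pos hz
  have hC := (rankinConstant_pos α β K).le
  have hM := (meanValue_pos hg.nonneg (⌊X⌋₊ + 1)).le
  choose! q hq hqQ hprime using hprime
  have hqX : ∀ n ∈ S, (q n : ℝ) ≤ X := fun n hn =>
    le_trans (by exact_mod_cast (hqQ n hn).le) hQX
  have hfiber := hg.sum_fiber_le_of_prime_dvd hα hθ hY hYX hz hB hK hSXY
    fun n hn => ⟨hq n hn, hqX n hn, hprime n hn⟩
  set M := meanValue g (⌊X⌋₊ + 1)
  calc ∑ n ∈ S, g n = ∑ r ∈ Q.primesBelow, ∑ n ∈ S with q n = r, g n :=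
        (sum_fiberwise_of_maps_to
          (fun n hn => Nat.mem_primesBelow.2 ⟨hqQ n hn, hq n hn⟩) g).symm
    _ ≤ ∑ r ∈ Q.primesBelow, 3 * rankinConstant α β K * Y * M / log z * (log r / r) :=
        sum_le_sum fun r _ => hfiber r
    _ = 3 * rankinConstant α β K * Y * M / log z * ∑ r ∈ Q.primesBelow, log r / r := by
        rw [mul_sum]
    _ ≤ 3 * rankinConstant α β K * Y * M / log z * (2 * log z) := by
        gcongr
        exact sum_primesBelow_log_div_le_of_le hz.le hQz
    _ = 6 * rankinConstant α β K * Y * M := by field_simp; ring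

end

/-! ### Splitting by the critical prime of the smooth part -/

section

variable {α β θ c ε B D K X Y z : ℝ} {g : ℕ → ℝ} {S : Finset ℕ}

-- If `z ^ 2 < smoothPart Q n`, adjoin the primes below `Q` in increasing order: the critical prime
-- is the one at which the smooth part first exceeds `z ^ 2`.
theorem smoothPart_le_or_exists (hz : 1 ≤ z) (Q y n : ℕ) :
    smoothPart Q n ≤ z ^ 2 ∨
    (∃ q, 1 < q ∧ q < Q ∧ z < (q : ℝ) ^ n.factorization q) ∨
    (∃ b ∈ Nat.smoothNumbers y, b ∣ n ∧ z ≤ b ∧ b ≤ z ^ 2) ∨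
    ∃ q : ℕ, q.Prime ∧ q < Q ∧ y ≤ q ∧ q ∣ n ∧ z ≤ smoothPart q n ∧ smoothPart q n ≤ z ^ 2 := by
  refine or_iff_not_imp_left.2 fun hlt => ?_
  obtain ⟨q, hq, hqQ, hqn, hle, hlt⟩ :=
    exists_prime_smoothPart_le_lt (one_le_pow₀ hz) (not_le.1 hlt)
  refine or_iff_not_imp_left.2 fun hpower => ?_
  have hqz : (q : ℝ) ^ n.factorization q ≤ z :=
    not_lt.1 fun h => hpower ⟨q, hq.one_lt, hqQ, h⟩
  have hzs : z ≤ smoothPart q n := by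
    refine le_of_mul_le_mul_left ?_ (zero_lt_one.trans_le hz)
    rw [← sq]
    exact hlt.le.trans (by gcongr)
  rcases lt_or_ge q y with hqy | hyq
  · exact Or.inl ⟨smoothPart q n, Nat.smoothNumbers_mono hqy.le (smoothPart_mem_smoothNumbers q n),
      smoothPart_dvd q n, hzs, hle⟩
  · exact Or.inr ⟨q, hq, hqQ, hyq, hqn, hzs, hle⟩

theorem sum_filter_or_le {f : ℕ → ℝ} (hf : ∀ n, 0 ≤ f n) (P R : ℕ → Prop) [DecidablePred P]
    [DecidablePred R] :
    ∑ n ∈ S with P n ∨ R n, f n ≤ ∑ n ∈ S with P n, f n + ∑ n ∈ S with R n, f n := by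
  rw [filter_or, ← sum_union_inter]
  exact le_add_of_nonneg_right (sum_nonneg fun n _ => hf n)

theorem sum_le_of_forall_or_or_or {f : ℕ → ℝ} (hf : ∀ n, 0 ≤ f n) {P₁ P₂ P₃ P₄ : ℕ → Prop}
    [DecidablePred P₁] [DecidablePred P₂] [DecidablePred P₃] [DecidablePred P₄]
    (h : ∀ n ∈ S, P₁ n ∨ P₂ n ∨ P₃ n ∨ P₄ n) :
    ∑ n ∈ S, f n ≤ ∑ n ∈ S with P₁ n, f n + (∑ n ∈ S with P₂ n, f n +
      (∑ n ∈ S with P₃ n, f n + ∑ n ∈ S with P₄ n, f n)) :=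
  calc ∑ n ∈ S, f n = ∑ n ∈ S with P₁ n ∨ P₂ n ∨ P₃ n ∨ P₄ n, f n := by
        rw [filter_true_of_mem h]
    _ ≤ _ := (sum_filter_or_le hf _ _).trans <| add_le_add_right
        ((sum_filter_or_le hf _ _).trans <| add_le_add_right (sum_filter_or_le hf _ _) _) _

theorem card_mul_pow_le_of_exists_lt_ordProj (hX : 0 ≤ X) {Q : ℕ} (hQ : 1 ≤ Q)
    (hQY : (Q : ℝ) ^ 200 ≤ Y) (hSXY : ∀ n ∈ S, (n : ℝ) ∈ Set.Icc X (X + Y))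
    (hlt : ∀ n ∈ S, ∃ q : ℕ, 1 < q ∧ q < Q ∧ (Q : ℝ) ^ 50 < (q : ℝ) ^ n.factorization q) :
    #S * (Q : ℝ) ^ 10 ≤ 2 * Y := by
  have hQ1 : (1 : ℝ) ≤ Q := by exact_mod_cast hQ
  have hY : 0 ≤ Y := le_trans (by positivity) hQY
  have hQY' : (Q : ℝ) ^ 50 * Q ≤ Y := by
    rw [← pow_succ]
    exact (pow_le_pow_right₀ hQ1 (by norm_num)).trans hQY
  calc #S * (Q : ℝ) ^ 10 ≤ Q * (2 * (Y / Q ^ 50)) * Q ^ 10 := by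
        gcongr
        exact card_le_of_exists_lt_ordProj hX (one_le_pow₀ hQ1) hQY' hSXY hlt
    _ = 2 * Y * (Q ^ 11 / Q ^ 50) := by ring
    _ ≤ 2 * Y := by
        refine mul_le_of_le_one_right (by positivity) (div_le_one_of_le₀ ?_ (by positivity))
        exact pow_le_pow_right₀ hQ1 (by norm_num)

theorem card_mul_pow_le_of_exists_smooth_dvd (hX : 0 ≤ X) {Q : ℕ} (hQ : 1 ≤ Q)
    (hQY : (Q : ℝ) ^ 200 ≤ Y) (y : ℕ) (hSXY : ∀ n ∈ S, (n : ℝ) ∈ Set.Icc X (X + Y))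
    (hdvd : ∀ n ∈ S, ∃ b ∈ Nat.smoothNumbers y, b ∣ n ∧ (Q : ℝ) ^ 50 ≤ b ∧
      b ≤ ((Q : ℝ) ^ 50) ^ 2) :
    #S * (Q : ℝ) ^ 10 ≤ 2 * Y *
      (rankinConstant 1 1 (1 / 5 * log y) * ∏ p ∈ y.primesBelow, (1 + 1 / (p : ℝ))) := by
  have hQ1 : (1 : ℝ) ≤ Q := by exact_mod_cast hQ
  have hQ0 : (0 : ℝ) < Q := zero_lt_one.trans_le hQ1
  have hcount := card_le_of_exists_smooth_dvd hX (le_trans (by positivity) hQY) (pow_pos hQ0 50) y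
    hSXY fun n hn => by
      obtain ⟨b, hby, hbn, hQb, hbQ⟩ := hdvd n hn
      refine ⟨b, hby, hbn, hQb, hbQ.trans (le_trans ?_ hQY)⟩
      rw [← pow_mul]
      exact pow_le_pow_right₀ hQ1 (by norm_num)
  have hsaving : ((Q : ℝ) ^ 50) ^ (-(1 / 5) : ℝ) * (Q : ℝ) ^ 10 = 1 := by
    rw [← Real.rpow_natCast_mul hQ0.le, ← Real.rpow_natCast, ← Real.rpow_add hQ0]
    norm_num
  refine (mul_le_mul_of_nonneg_right hcount (by positivity)).trans_eq ?_
  rw [mul_assoc, mul_right_comm _ _ ((Q : ℝ) ^ 10), hsaving, one_mul]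

theorem pow_mul_le_of_le_sq {Q s : ℝ} (hQ : 1 ≤ Q) (hQY : Q ^ 200 ≤ Y) {q : ℝ} (hq : 0 ≤ q)
    (hqQ : q ≤ Q) {k : ℕ} (hk : k ≤ 100) (hs : s ≤ (Q ^ 50) ^ 2) : q ^ k * s ≤ Y :=
  calc q ^ k * s ≤ q ^ k * (Q ^ 50) ^ 2 := by gcongr
    _ ≤ Q ^ k * (Q ^ 50) ^ 2 := by gcongr
    _ = Q ^ (k + 100) := by ring
    _ ≤ Q ^ 200 := pow_le_pow_right₀ hQ (by lia)
    _ ≤ Y := hQY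

theorem IsShiuFunction.sum_le_of_exists_critical_prime (hg : IsShiuFunction α β θ g)
    (hα : 1 ≤ α) (hθ : θ ≤ 1 / 20) {Q : ℕ} (hQ : 2 ≤ Q) (hQX : Q ≤ X) (hQY : (Q : ℝ) ^ 200 ≤ Y)
    (hYX : Y ≤ X) (hB : log X ≤ B * log Q) (hK : K = (2 * log α + 8) * B + 1)
    (hSXY : ∀ n ∈ S, (n : ℝ) ∈ Set.Icc X (X + Y))
    (hcritical : ∀ n ∈ S, ∃ q : ℕ, q.Prime ∧ q < Q ∧ ⌈exp (5 * K)⌉₊ ≤ q ∧ q ∣ n ∧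
      (Q : ℝ) ^ 50 ≤ smoothPart q n ∧ smoothPart q n ≤ ((Q : ℝ) ^ 50) ^ 2) :
    ∑ n ∈ S, g n ≤ 6 * rankinConstant α β K * Y * meanValue g (⌊X⌋₊ + 1) := by
  have hQ1 : (1 : ℝ) < Q := by exact_mod_cast hQ
  have hlQ : 0 < log Q := Real.log_pos hQ1
  have hBnonneg : 0 ≤ B :=
    nonneg_of_mul_nonneg_left ((Real.log_nonneg (hQ1.le.trans hQX)).trans hB) hlQ
  have hQz : (Q : ℝ) ≤ Q ^ 50 := le_self_pow₀ hQ1.le (by norm_num)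
  have hBz : log X ≤ B * log ((Q : ℝ) ^ 50) := hB.trans (by gcongr)
  refine hg.sum_le_of_exists_prime_dvd hα hθ hQX (le_trans (by positivity) hQY) hYX
    (one_lt_pow₀ hQ1 (by norm_num)) hQz hBz hK hSXY fun n hn => ?_
  obtain ⟨q, hq, hqQ, hKq, hqn, hle, hge⟩ := hcritical n hn
  refine ⟨q, hq, hqQ, ?_, hqn, hle, ?_⟩
  · exact (Real.le_log_iff_exp_le (by exact_mod_cast hq.pos)).2 (Nat.ceil_le.1 hKq)
  · exact pow_mul_le_of_le_sq hQ1.le hQY q.cast_nonneg (by exact_mod_cast hqQ.le) (by norm_num) hge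

theorem sum_le_of_card_mul_le {f : ℕ → ℝ} {A E M : ℝ} (hD : 0 ≤ D) (hM : 0 ≤ M)
    (hf : ∀ n ∈ S, f n ≤ D * E * M) (hcard : #S * E ≤ A) : ∑ n ∈ S, f n ≤ D * A * M :=
  calc ∑ n ∈ S, f n ≤ #S • (D * E * M) := sum_le_card_nsmul _ _ _ hf
    _ = D * (#S * E) * M := by rw [nsmul_eq_mul]; ring
    _ ≤ D * A * M := by gcongr

theorem exists_sum_le_of_log_le_mul_log (hα : 1 ≤ α) (β B : ℝ) (hD : 0 ≤ D) :
    ∃ C : ℝ, ∀ {g : ℕ → ℝ} {θ : ℝ}, IsShiuFunction α β θ g → θ ≤ 1 / 20 →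
      ∀ {X Y : ℝ} {Q : ℕ}, 2 ≤ Q → (Q : ℝ) ^ 200 ≤ Y → Y ≤ X → log X ≤ B * log Q →
      ∀ {S : Finset ℕ}, (∀ n ∈ S, (n : ℝ) ∈ Set.Icc X (X + Y)) →
      (∀ n ∈ S, g n ≤ D * (Q : ℝ) ^ 10 * meanValue g (⌊X⌋₊ + 1)) →
      ∑ n ∈ S, g n ≤ C * (Y * meanValue g (⌊X⌋₊ + 1)) := by
  classical
  set K : ℝ := (2 * log α + 8) * B + 1 with hK
  set y : ℕ := ⌈exp (5 * K)⌉₊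
  set P : ℝ := rankinConstant 1 1 (1 / 5 * log y) * ∏ p ∈ y.primesBelow, (1 + 1 / (p : ℝ))
  refine ⟨3 * rankinConstant α β 0 * exp ((2 * log α + 8) * B) + (D * 2 + (D * (2 * P) +
    6 * rankinConstant α β K)), fun {g θ} hg hθ {X Y Q} hQ hQY hYX hB {S} hSXY htrivial => ?_⟩
  have hQ1 : (1 : ℝ) ≤ Q := by exact_mod_cast one_le_two.trans hQ
  have hQX : (Q : ℝ) ≤ X := (le_self_pow₀ hQ1 (by norm_num)).trans (hQY.trans hYX)
  have hX : 0 ≤ X := Q.cast_nonneg.trans hQX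
  have hY : 0 ≤ Y := le_trans (by positivity) hQY
  have hM := (meanValue_pos hg.nonneg (⌊X⌋₊ + 1)).le
  have hmem (R : ℕ → Prop) : ∀ n ∈ S.filter R, (n : ℝ) ∈ Set.Icc X (X + Y) ∧
      g n ≤ D * (Q : ℝ) ^ 10 * meanValue g (⌊X⌋₊ + 1) ∧ R n := fun n hn =>
    have ⟨hnS, hnR⟩ := mem_filter.1 hn
    ⟨hSXY n hnS, htrivial n hnS, hnR⟩
  set M := meanValue g (⌊X⌋₊ + 1)
  calc ∑ n ∈ S, g n ≤ _ + (_ + (_ + _)) := sum_le_of_forall_or_or_or hg.nonneg fun n _ =>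
        smoothPart_le_or_exists (one_le_pow₀ hQ1 : 1 ≤ (Q : ℝ) ^ 50) Q y n
    _ ≤ 3 * rankinConstant α β 0 * exp ((2 * log α + 8) * B) * Y * M +
        (D * (2 * Y) * M + (D * (2 * Y * P) * M + 6 * rankinConstant α β K * Y * M)) := by
        refine add_le_add ?smooth (add_le_add ?power (add_le_add ?verySmooth ?critical))
        case smooth =>
          exact hg.sum_le_of_log_le_mul_log hα (by linarith) hQ hQX hY hYX hB
            (fun n hn => (hmem _ n hn).1) fun n hn =>
              pow_mul_le_of_le_sq hQ1 hQY Q.cast_nonneg le_rfl (by norm_num) (hmem _ n hn).2.2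
        case power =>
          exact sum_le_of_card_mul_le hD hM (fun n hn => (hmem _ n hn).2.1) <|
            card_mul_pow_le_of_exists_lt_ordProj hX (one_le_two.trans hQ) hQY
              (fun n hn => (hmem _ n hn).1) fun n hn => (hmem _ n hn).2.2
        case verySmooth =>
          exact sum_le_of_card_mul_le hD hM (fun n hn => (hmem _ n hn).2.1) <|
            card_mul_pow_le_of_exists_smooth_dvd hX (one_le_two.trans hQ) hQY y
              (fun n hn => (hmem _ n hn).1) fun n hn => (hmem _ n hn).2.2
        case critical =>
          exact hg.sum_le_of_exists_critical_prime hα hθ hQ hQX hQY hYX hB hK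
            (fun n hn => (hmem _ n hn).1) fun n hn => (hmem _ n hn).2.2
    _ = _ := by ring

theorem exists_nat_pow_le_le_pow {x : ℝ} {k : ℕ} (hk : k ≠ 0) (hx : 2 ^ k ≤ x) :
    ∃ Q : ℕ, 2 ≤ Q ∧ (Q : ℝ) ^ k ≤ x ∧ x ≤ (Q : ℝ) ^ (2 * k) := by
  have hx0 : 0 ≤ x := le_trans (by positivity) hx
  have hroot : (x ^ (k⁻¹ : ℝ)) ^ k = x := Real.rpow_inv_natCast_pow hx0 hk
  set r := x ^ (k⁻¹ : ℝ)
  have hr0 : 0 ≤ r := Real.rpow_nonneg hx0 _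
  have hr : 2 ≤ r := by rwa [← pow_le_pow_iff_left₀ zero_le_two hr0 hk, hroot]
  have hQ : 2 ≤ ⌊r⌋₊ := Nat.le_floor (by exact_mod_cast hr)
  refine ⟨⌊r⌋₊, hQ, ?_, ?_⟩
  · rw [← hroot]
    gcongr
    exact Nat.floor_le hr0
  · rw [pow_mul, ← hroot]
    gcongr
    have : (2 : ℝ) ≤ ⌊r⌋₊ := by exact_mod_cast hQ
    nlinarith [Nat.lt_floor_add_one r]

theorem IsShiuFunction.le_mul_rpow_mul (hg : IsShiuFunction α β (ε / 100) g) (hε : 0 < ε)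
    (hX : 2 ≤ X) (hXY : X ^ ε ≤ Y) (hYX : Y ≤ X) (hc : 0 < c) {M : ℝ}
    (hcM : c * X ^ (-(ε / 200)) ≤ M) {n : ℕ} (hn : (n : ℝ) ∈ Set.Icc X (X + Y)) :
    g n ≤ β / c * Y ^ (1 / 40 : ℝ) * M := by
  have hX0 : 0 < X := by linarith
  have hβ : 0 ≤ β := zero_le_one.trans hg.one_le_beta
  have hn1 : (1 : ℝ) ≤ n := by linarith [hn.1]
  have hnX : (n : ℝ) ≤ X ^ 2 := by nlinarith [hn.2]
  have hY0 : 0 ≤ Y := (Real.rpow_nonneg hX0.le ε).trans hXY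
  have hexponents : (X ^ 2) ^ (ε / 100) = (X ^ ε) ^ (1 / 40 : ℝ) * X ^ (-(ε / 200)) := by
    rw [← Real.rpow_natCast, ← Real.rpow_mul hX0.le, ← Real.rpow_mul hX0.le,
      ← Real.rpow_add hX0]
    push_cast
    ring_nf
  calc g n ≤ β * (n : ℝ) ^ (ε / 100) := hg.le_rpow n (by exact_mod_cast hn1)
    _ ≤ β * (X ^ 2) ^ (ε / 100) := by gcongr
    _ = β / c * (X ^ ε) ^ (1 / 40 : ℝ) * (c * X ^ (-(ε / 200))) := by
        rw [hexponents]
        field_simp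
    _ ≤ β / c * Y ^ (1 / 40 : ℝ) * M := by gcongr

theorem log_le_mul_log_of_rpow_le {Q : ℕ} (hε : 0 < ε) (hX : 0 < X) (hXY : X ^ ε ≤ Y) {k : ℕ}
    (hYQ : Y ≤ (Q : ℝ) ^ k) : log X ≤ k / ε * log Q := by
  rw [div_mul_eq_mul_div, le_div_iff₀ hε, mul_comm, ← Real.log_rpow hX, ← Real.log_pow]
  exact Real.log_le_log (Real.rpow_pos_of_pos hX ε) (hXY.trans hYQ)

theorem IsShiuFunction.mono {θ' : ℝ} (hg : IsShiuFunction α β θ g) (hθ : θ ≤ θ') :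
    IsShiuFunction α β θ' g :=
  { hg with
    le_rpow := fun n hn => (hg.le_rpow n hn).trans <|
      mul_le_mul_of_nonneg_left
        (Real.rpow_le_rpow_of_exponent_le (by exact_mod_cast hn) hθ)
        (zero_le_one.trans hg.one_le_beta) }

theorem le_one_of_two_le_rpow_le (h2 : 2 ≤ X ^ ε) (hXY : X ^ ε ≤ X) : ε ≤ 1 := by
  rwa [← Real.rpow_le_rpow_left_iff (x := X) (by linarith), Real.rpow_one]

theorem rpow_le_pow_of_le_pow {Q x : ℝ} {k l : ℕ} {r : ℝ} (hQ : 0 ≤ Q) (hx : 0 ≤ x) (hr : 0 ≤ r)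
    (hxQ : x ≤ Q ^ k) (hkl : k * r = l) : x ^ r ≤ Q ^ l := by
  rw [← Real.rpow_natCast, ← hkl, Real.rpow_natCast_mul hQ]
  gcongr

theorem exists_sum_le_mul_meanValue (hα : 1 ≤ α) (hβ : 0 ≤ β) (hε : 0 < ε) :
    ∃ C : ℝ, ∀ {g : ℕ → ℝ}, IsShiuFunction α β (ε / 100) g →
      ∀ {X Y : ℝ}, 2 ≤ X ^ ε → X ^ ε ≤ Y → Y ≤ X →
      ∀ {S : Finset ℕ}, (∀ n ∈ S, (n : ℝ) ∈ Set.Icc X (X + Y)) →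
      ∑ n ∈ S, g n ≤ C * (Y * meanValue g (⌊X⌋₊ + 1)) := by
  obtain ⟨c, hc, hlower⟩ := exists_mul_rpow_neg_le_meanValue (η := ε / 200) (by positivity)
  have hD : 0 ≤ β / c := by positivity
  obtain ⟨C, hlarge⟩ := exists_sum_le_of_log_le_mul_log hα β ((400 : ℕ) / ε) hD
  refine ⟨max C (64 * (β / c)), fun {g} hg {X Y} h2 hXY hYX {S} hSXY => ?_⟩
  have hX : 2 ≤ X := by linarith
  have hY : 0 ≤ Y := by linarith
  have hM := (meanValue_pos hg.nonneg (⌊X⌋₊ + 1)).le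
  have hbound : ∀ {Q : ℝ} {k l : ℕ}, 0 ≤ Q → Y ≤ Q ^ k → k * (1 / 40 : ℝ) = l →
      ∀ n ∈ S, g n ≤ β / c * Q ^ l * meanValue g (⌊X⌋₊ + 1) := fun hQ hYQ hkl n hn => by
    refine (hg.le_mul_rpow_mul hε hX hXY hYX hc (hlower g hg.nonneg X hX) (hSXY n hn)).trans ?_
    gcongr
    exact rpow_le_pow_of_le_pow hQ hY (by norm_num) hYQ hkl
  rcases le_total (2 ^ 200) Y with hlargeY | hsmallY
  · obtain ⟨Q, hQ, hQY, hYQ⟩ := exists_nat_pow_le_le_pow (by norm_num) hlargeY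
    have hε1 : ε ≤ 1 := le_one_of_two_le_rpow_le h2 (hXY.trans hYX)
    calc ∑ n ∈ S, g n ≤ C * (Y * meanValue g (⌊X⌋₊ + 1)) :=
          hlarge hg (by linarith) hQ hQY hYX
            (log_le_mul_log_of_rpow_le hε (by linarith) hXY hYQ) hSXY
            (hbound Q.cast_nonneg hYQ (by norm_num))
      _ ≤ _ := by gcongr; exact le_max_left _ _
  · have hcard : #S * (2 : ℝ) ^ 5 ≤ 2 * Y * 2 ^ 5 := by
      have := card_le_of_forall_dvd (by linarith) one_pos (by push_cast; linarith) hSXY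
        fun n _ => one_dvd n
      rw [Nat.cast_one, div_one] at this
      gcongr
    calc ∑ n ∈ S, g n ≤ β / c * (2 * Y * 2 ^ 5) * meanValue g (⌊X⌋₊ + 1) :=
          sum_le_of_card_mul_le hD hM (hbound zero_le_two hsmallY (by norm_num)) hcard
      _ = 64 * (β / c) * (Y * meanValue g (⌊X⌋₊ + 1)) := by ring
      _ ≤ _ := by gcongr; exact le_max_right _ _

end

end Shiu

theorem stmt_2_general {α β ε : ℝ} (hα : 1 ≤ α) (hβ : 0 ≤ β) (hε : 0 < ε) :
    ∃ C : ℝ, ∀ g : ℕ → ℝ, Shiu.IsShiuFunction α β (ε / 100) g →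
      ∀ X Y : ℝ, 2 ≤ X ^ ε → X ^ ε ≤ Y → Y ≤ X →
        (1 / Y) * ∑ n ∈ Finset.Icc ⌈X⌉₊ ⌊X + Y⌋₊, g n
          ≤ C * ∏ p ∈ (Finset.Icc 1 ⌊X⌋₊).filter Nat.Prime, (1 + (g p - 1) / (p : ℝ)) := by
  obtain ⟨C, hC⟩ := Shiu.exists_sum_le_mul_meanValue hα hβ hε
  refine ⟨C, fun g hg X Y h2 hXY hYX => ?_⟩
  have hY : 0 < Y := by linarith
  have hsum := hC hg h2 hXY hYX (S := Finset.Icc ⌈X⌉₊ ⌊X + Y⌋₊) fun n hn => by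
    rwa [mem_Icc, Nat.ceil_le, Nat.le_floor_iff (by linarith)] at hn
  rw [one_div, inv_mul_le_iff₀ hY, ← Nat.primesLE_eq_filter_Icc_one]
  exact hsum.trans_eq (mul_left_comm _ _ _)

theorem stmt_2 (α β ε : ℝ) (hα : 1 ≤ α) (hβ : 1 ≤ β) (hε : ε ∈ Set.Ioo (0 : ℝ) 1) :
    ∃ C : ℝ, ∀ g : ℕ → ℝ,
      (g 1 = 1) →
      (∀ m n : ℕ, Nat.Coprime m n → g (m * n) = g m * g n) →
      (∀ n : ℕ, 0 ≤ g n) →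
      (∀ p : ℕ, p.Prime → ∀ v : ℕ, 1 ≤ v → g (p ^ v) ≤ α ^ v) →
      (∀ n : ℕ, 1 ≤ n → g n ≤ β * (n : ℝ) ^ (ε ^ 3 / 1000)) →
      ∀ X Y : ℝ, 2 ≤ X ^ ε → X ^ ε ≤ Y → Y ≤ X →
        (1 / Y) * ∑ n ∈ Finset.Icc ⌈X⌉₊ ⌊X + Y⌋₊, g n
          ≤ C * ∏ p ∈ (Finset.Icc 1 ⌊X⌋₊).filter Nat.Prime, (1 + (g p - 1) / (p : ℝ)) := by
  have hexponent : ε ^ 3 / 1000 ≤ ε / 100 := by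
    have : ε ^ 3 ≤ ε := pow_le_of_le_one hε.1.le hε.2.le (by norm_num)
    linarith [hε.1]
  obtain ⟨C, hC⟩ := stmt_2_general hα (zero_le_one.trans hβ) hε.1
  exact ⟨C, fun g hone hmul hnonneg hprime hgrowth =>
    hC g (Shiu.IsShiuFunction.mono ⟨⟨hone, hmul, hnonneg⟩, hprime, hgrowth⟩ hexponent)⟩
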